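/- arXiv:2406.14987 — 3 statements merged into one kernel-verified Lean document; each statement's English description precedes it below -/
import Mathlib

section
/- Let N ≥ 2 be a natural number and f : [1,N] → ℝ a C² function with |f(x)| ≤ 1, x|f'(x)| ≤ 1, and x²|f''(x)| ≤ 1 for all x ∈ [1,N]. Then there exists a C² function g : (0,∞) → ℝ with support contained in [1/e, eN] that extends f, satisfying |g(x)| ≤ 10/9, x|g'(x)| ≤ 7/3, and x²|g''(x)| ≤ 41/5 for all x > 0. -/
open Set

namespace ExtPoly

/-- Evaluation of an integer polynomial given by its coefficient list. -/
noncomputable def ev : List ℤ → ℝ → ℝ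
  | [], _ => 0
  | c :: L, x => (c : ℝ) + x * ev L x

def addL : List ℤ → List ℤ → List ℤ
  | [], M => M
  | c :: L, [] => c :: L
  | c :: L, d :: M => (c + d) :: addL L M

def smulL (k : ℤ) : List ℤ → List ℤ
  | [] => []
  | c :: L => (k * c) :: smulL k L

def der : List ℤ → List ℤ
  | [] => []
  | _ :: L => addL L (0 :: der L)

/-- `c + (j + u) * Q`, as a list in `u` -/
def mulLin (j : ℤ) : ℤ → List ℤ → List ℤ
  | c, [] => [c]
  | c, q :: Q => (c + j * q) :: mulLin j q Q

def pw (n : ℤ) : List ℤ → ℤ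
  | [] => 1
  | _ :: L => n * pw n L

/-- `n ^ length * L ((j + u) / n)`, as a list in `u` -/
def cell (n j : ℤ) : List ℤ → List ℤ
  | [] => []
  | c :: L => mulLin j (c * (n * pw n L)) (cell n j L)

def low : List ℤ → ℤ
  | [] => 0
  | c :: L => c + min 0 (low L)

lemma ev_addL (L M : List ℤ) (x : ℝ) : ev (addL L M) x = ev L x + ev M x := by
  induction L generalizing M with
  | nil => simp [addL, ev]
  | cons c L ih =>
    cases M with
    | nil => simp [addL, ev]
    | cons d M => simp [addL, ev, ih]; ring

lemma ev_smulL (k : ℤ) (L : List ℤ) (x : ℝ) : ev (smulL k L) x = k * ev L x := by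
  induction L with
  | nil => simp [smulL, ev]
  | cons c L ih => simp [smulL, ev, ih]; ring

lemma hasDerivAt_ev (L : List ℤ) (x : ℝ) : HasDerivAt (ev L) (ev (der L) x) x := by
  induction L with
  | nil => exact hasDerivAt_const x 0
  | cons c L ih =>
    have := ((hasDerivAt_id x).mul ih).const_add (c : ℝ)
    refine this.congr_deriv ?_
    simp [der, ev_addL, ev]

lemma ev_mulLin (j c : ℤ) (Q : List ℤ) (u : ℝ) :
    ev (mulLin j c Q) u = c + (j + u) * ev Q u := by
  induction Q generalizing c with
  | nil => simp [mulLin, ev]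
  | cons q Q ih => simp [mulLin, ev, ih]; ring

lemma ev_cell (n j : ℤ) (hn : (n : ℝ) ≠ 0) (L : List ℤ) (u : ℝ) :
    ev (cell n j L) u = pw n L * ev L ((j + u) / n) := by
  induction L with
  | nil => simp [cell, ev]
  | cons c L ih =>
    simp only [cell, ev, ev_mulLin, ih, pw]
    push_cast
    field_simp

lemma low_le (L : List ℤ) (u : ℝ) (h0 : 0 ≤ u) (h1 : u ≤ 1) : (low L : ℝ) ≤ ev L u := by
  induction L with
  | nil => simp [low, ev]
  | cons c L ih =>
    simp only [low, ev]
    push_cast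
    have h : min 0 (low L : ℝ) ≤ u * ev L u := by
      rcases le_total 0 (ev L u) with h | h
      · exact (min_le_left _ _).trans (mul_nonneg h0 h)
      · refine (min_le_right _ _).trans (ih.trans ?_)
        nlinarith
    linarith

lemma pw_pos (n : ℤ) (hn : 0 < n) (L : List ℤ) : 0 < pw n L := by
  induction L with
  | nil => simp [pw]
  | cons c L ih => exact mul_pos hn ih

def posOn : ℕ → List ℤ → Bool
  | 0, L => decide (0 ≤ low L)
  | k + 1, L => decide (0 ≤ low L) || (posOn k (cell 2 0 L) && posOn k (cell 2 1 L))

lemma posOn_sound (k : ℕ) (L : List ℤ) (h : posOn k L = true) (t : ℝ)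
    (h0 : 0 ≤ t) (h1 : t ≤ 1) : 0 ≤ ev L t := by
  have base : ∀ (L : List ℤ), 0 ≤ low L → ∀ t : ℝ, 0 ≤ t → t ≤ 1 → 0 ≤ ev L t := by
    intro L h t h0 h1
    have : (0 : ℝ) ≤ low L := by exact_mod_cast h
    exact this.trans (low_le L t h0 h1)
  induction k generalizing L t with
  | zero => exact base L (of_decide_eq_true h) t h0 h1
  | succ k ih =>
    simp only [posOn, Bool.or_eq_true, Bool.and_eq_true, decide_eq_true_eq] at h
    rcases h with h | ⟨hl, hr⟩
    · exact base L h t h0 h1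
    · have p : (0 : ℝ) < pw 2 L := by exact_mod_cast pw_pos 2 (by norm_num) L
      rcases le_total t (1 / 2) with ht | ht
      · have := ih _ hl (2 * t) (by linarith) (by linarith)
        rw [ev_cell 2 0 (by norm_num)] at this
        have et : (((0 : ℤ) : ℝ) + 2 * t) / ((2 : ℤ) : ℝ) = t := by push_cast; ring
        rw [et] at this
        exact nonneg_of_mul_nonneg_right this p
      · have := ih _ hr (2 * t - 1) (by linarith) (by linarith)
        rw [ev_cell 2 1 (by norm_num)] at this
        have et : (((1 : ℤ) : ℝ) + (2 * t - 1)) / ((2 : ℤ) : ℝ) = t := by push_cast; ring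
        rw [et] at this
        exact nonneg_of_mul_nonneg_right this p

/-- all sign combinations of `K + q (± A ± B ± C)` -/
def okAll (K q : ℤ) (A B C : List ℤ) : Bool :=
  [1, -1].all fun s₁ : ℤ => [1, -1].all fun s₂ : ℤ => [1, -1].all fun s₃ : ℤ =>
    posOn 9 (addL [K] (addL (smulL (q * s₁) A) (addL (smulL (q * s₂) B) (smulL (q * s₃) C))))

lemma okAll_sound (K q : ℤ) (hq : 0 < q) (A B C : List ℤ) (h : okAll K q A B C = true)
    (a b c t : ℝ)
    (h0 : 0 ≤ t) (h1 : t ≤ 1) (ha : |a| ≤ 1) (hb : |b| ≤ 1) (hc : |c| ≤ 1) :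
    |a * ev A t + b * ev B t + c * ev C t| ≤ K / q := by
  have hq' : (0 : ℝ) < q := by exact_mod_cast hq
  have main : |ev A t| + |ev B t| + |ev C t| ≤ K / q := by
    rw [le_div_iff₀ hq']
    simp only [okAll, List.all_cons, List.all_nil, Bool.and_true, Bool.and_eq_true] at h
    obtain ⟨⟨⟨g1, g2⟩, ⟨g3, g4⟩⟩, ⟨⟨g5, g6⟩, ⟨g7, g8⟩⟩⟩ := h
    have g1 := posOn_sound _ _ g1 t h0 h1
    have g2 := posOn_sound _ _ g2 t h0 h1
    have g3 := posOn_sound _ _ g3 t h0 h1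
    have g4 := posOn_sound _ _ g4 t h0 h1
    have g5 := posOn_sound _ _ g5 t h0 h1
    have g6 := posOn_sound _ _ g6 t h0 h1
    have g7 := posOn_sound _ _ g7 t h0 h1
    have g8 := posOn_sound _ _ g8 t h0 h1
    simp only [ev_addL, ev_smulL, ev] at g1 g2 g3 g4 g5 g6 g7 g8
    push_cast at g1 g2 g3 g4 g5 g6 g7 g8
    rcases abs_cases (ev A t) with ⟨e1, -⟩ | ⟨e1, -⟩ <;>
    rcases abs_cases (ev B t) with ⟨e2, -⟩ | ⟨e2, -⟩ <;>
    rcases abs_cases (ev C t) with ⟨e3, -⟩ | ⟨e3, -⟩ <;>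
    rw [e1, e2, e3] <;> linarith
  calc |a * ev A t + b * ev B t + c * ev C t|
      ≤ |a * ev A t| + |b * ev B t| + |c * ev C t| := abs_add_three _ _ _
    _ ≤ |ev A t| + |ev B t| + |ev C t| := by
        simp only [abs_mul]
        have := mul_le_of_le_one_left (abs_nonneg (ev A t)) ha
        have := mul_le_of_le_one_left (abs_nonneg (ev B t)) hb
        have := mul_le_of_le_one_left (abs_nonneg (ev C t)) hc
        linarith
    _ ≤ _ := main

def RA : List ℤ := [4, 0, 0, -53, -44, 792, -2047, 2480, -1485, 353]
def RB : List ℤ := [0, 4, 2, -107, 907, -3512, 7005, -7562, 4218, -955]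
def RC : List ℤ := [0, 0, 2, -41, 310, -1096, 2077, -2182, 1199, -269]
def LA : List ℤ := [4, 0, 0, -30, -104, 611, -1021, 743, -203]
def LB : List ℤ := [0, -4, 2, 83, -573, 1646, -2276, 1507, -385]
def LC : List ℤ := [0, 0, 2, -10, 22, -15, -17, 29, -11]

/-- second derivative minus sigma times the first derivative -/
def op2 (σ : ℤ) (L : List ℤ) : List ℤ := addL (der (der L)) (smulL (-σ) (der L))

set_option maxRecDepth 100000 in
lemma okR0 : okAll 40 9 RA RB RC = true := by decide +kernel
set_option maxRecDepth 100000 in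
lemma okR1 : okAll 28 3 (der RA) (der RB) (der RC) = true := by decide +kernel
set_option maxRecDepth 100000 in
lemma okR2 : okAll 164 5 (op2 1 RA) (op2 1 RB) (op2 1 RC) = true := by decide +kernel
set_option maxRecDepth 100000 in
lemma okL0 : okAll 40 9 LA LB LC = true := by decide +kernel
set_option maxRecDepth 100000 in
lemma okL1 : okAll 28 3 (der LA) (der LB) (der LC) = true := by decide +kernel
set_option maxRecDepth 100000 in
lemma okL2 : okAll 164 5 (op2 (-1) LA) (op2 (-1) LB) (op2 (-1) LC) = true := by decide +kernel

/-- `g` is `C²` on `S` with first derivative `g1` and second derivative `g2`. -/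
def C2 (S : Set ℝ) (g g1 g2 : ℝ → ℝ) : Prop :=
  (∀ x ∈ S, HasDerivWithinAt g (g1 x) S x) ∧ (∀ x ∈ S, HasDerivWithinAt g1 (g2 x) S x) ∧
    ContinuousOn g2 S

lemma C2.congr {S : Set ℝ} {u u1 u2 g g1 g2 : ℝ → ℝ} (h : C2 S u u1 u2)
    (h0 : EqOn g u S) (h1 : EqOn g1 u1 S) (h2 : EqOn g2 u2 S) : C2 S g g1 g2 := by
  refine ⟨fun x hx => ?_, fun x hx => ?_, h.2.2.congr h2⟩
  · rw [h1 hx]; exact (h.1 x hx).congr h0 (h0 hx)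
  · rw [h2 hx]; exact (h.2.1 x hx).congr h1 (h1 hx)

lemma hasDeriv_union {S T : Set ℝ} (hS : IsClosed S) (hT : IsClosed T) {g g1 : ℝ → ℝ}
    (h : ∀ x ∈ S, HasDerivWithinAt g (g1 x) S x) (k : ∀ x ∈ T, HasDerivWithinAt g (g1 x) T x) :
    ∀ x ∈ S ∪ T, HasDerivWithinAt g (g1 x) (S ∪ T) x := by
  intro x _
  refine HasDerivWithinAt.union ?_ ?_
  · by_cases hx : x ∈ S
    · exact h x hx
    · exact HasFDerivWithinAt.of_notMem_closure (by rwa [hS.closure_eq])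
  · by_cases hx : x ∈ T
    · exact k x hx
    · exact HasFDerivWithinAt.of_notMem_closure (by rwa [hT.closure_eq])

lemma C2.union {S T : Set ℝ} (hS : IsClosed S) (hT : IsClosed T) {g g1 g2 : ℝ → ℝ}
    (h : C2 S g g1 g2) (k : C2 T g g1 g2) : C2 (S ∪ T) g g1 g2 :=
  ⟨hasDeriv_union hS hT h.1 k.1, hasDeriv_union hS hT h.2.1 k.2.1,
    h.2.2.union_of_isClosed k.2.2 hS hT⟩

lemma C2_zero (S : Set ℝ) : C2 S (fun _ => 0) (fun _ => 0) (fun _ => 0) :=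
  ⟨fun x _ => hasDerivWithinAt_const x S 0, fun x _ => hasDerivWithinAt_const x S 0,
    continuousOn_const⟩

/-- linear combination, normalised -/
noncomputable def lc (a b c : ℝ) (A B C : List ℤ) (t : ℝ) : ℝ :=
  (a * ev A t + b * ev B t + c * ev C t) / 4

lemma hasDerivAt_lc (a b c : ℝ) (A B C : List ℤ) (t : ℝ) :
    HasDerivAt (lc a b c A B C) (lc a b c (der A) (der B) (der C) t) t :=
  (((((hasDerivAt_ev A t).const_mul a).add ((hasDerivAt_ev B t).const_mul b)).add
    ((hasDerivAt_ev C t).const_mul c)).div_const 4)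

lemma lc_op2 (a b c : ℝ) (A B C : List ℤ) (σ : ℤ) (t : ℝ) :
    lc a b c (op2 σ A) (op2 σ B) (op2 σ C) t =
      lc a b c (der (der A)) (der (der B)) (der (der C)) t
        - σ * lc a b c (der A) (der B) (der C) t := by
  simp only [lc, op2, ev_addL, ev_smulL]; push_cast; ring

lemma lc_bound (p q : ℤ) (hq : 0 < q) (A B C : List ℤ) (h : okAll (4 * p) q A B C = true)
    (a b c t : ℝ)
    (h0 : 0 ≤ t) (h1 : t ≤ 1) (ha : |a| ≤ 1) (hb : |b| ≤ 1) (hc : |c| ≤ 1) :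
    |lc a b c A B C t| ≤ p / q := by
  have := okAll_sound _ q hq A B C h a b c t h0 h1 ha hb hc
  rw [lc, abs_div, abs_of_pos (show (0 : ℝ) < 4 by norm_num), div_le_iff₀ (by norm_num)]
  refine this.trans (le_of_eq ?_)
  push_cast; ring

/-- the three transplanted functions -/
noncomputable def tr0 (σ : ℤ) (K a b c : ℝ) (A B C : List ℤ) (x : ℝ) : ℝ :=
  lc a b c A B C (σ * (Real.log x - Real.log K))
noncomputable def tr1 (σ : ℤ) (K a b c : ℝ) (A B C : List ℤ) (x : ℝ) : ℝ :=
  σ * lc a b c (der A) (der B) (der C) (σ * (Real.log x - Real.log K)) / x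
noncomputable def tr2 (σ : ℤ) (K a b c : ℝ) (A B C : List ℤ) (x : ℝ) : ℝ :=
  lc a b c (op2 σ A) (op2 σ B) (op2 σ C) (σ * (Real.log x - Real.log K)) / x ^ 2

lemma C2_tr (σ : ℤ) (hσ : σ * σ = 1) (K a b c : ℝ) (A B C : List ℤ) (S : Set ℝ)
    (hS : ∀ x ∈ S, 0 < x) :
    C2 S (tr0 σ K a b c A B C) (tr1 σ K a b c A B C) (tr2 σ K a b c A B C) := by
  have hσ' : (σ : ℝ) * σ = 1 := by exact_mod_cast hσ
  have hlog : ∀ x : ℝ, 0 < x →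
      HasDerivAt (fun x => σ * (Real.log x - Real.log K)) (σ * x⁻¹) x := fun x hx =>
    ((Real.hasDerivAt_log hx.ne').sub_const _).const_mul _
  refine ⟨fun x hx => ?_, fun x hx => ?_, fun x hx => ?_⟩
  · have := (hasDerivAt_lc a b c A B C _).comp x (hlog x (hS x hx))
    refine (this.congr_deriv ?_).hasDerivWithinAt
    rw [tr1]; field_simp
  · have hx0 := hS x hx
    have := (((hasDerivAt_lc a b c (der A) (der B) (der C) _).comp x (hlog x hx0)).const_mul
      (σ : ℝ)).div (hasDerivAt_id x) hx0.ne'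
    refine (this.congr_deriv ?_).hasDerivWithinAt
    rw [tr2, lc_op2]
    simp only [Function.comp, id]
    field_simp
    linear_combination lc a b c (der (der A)) (der (der B)) (der (der C))
      (σ * (Real.log x - Real.log K)) * hσ'
  · have hx0 := hS x hx
    have h1 := ((hasDerivAt_lc a b c (op2 σ A) (op2 σ B) (op2 σ C) _).comp x (hlog x hx0)).div
      ((hasDerivAt_id x).pow 2) (pow_ne_zero 2 hx0.ne')
    exact h1.continuousAt.continuousWithinAt

lemma tr_bound (σ : ℤ) (hσ : σ * σ = 1) (K a b c : ℝ) (A B C : List ℤ)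
    (k0 : okAll 40 9 A B C = true) (k1 : okAll 28 3 (der A) (der B) (der C) = true)
    (k2 : okAll 164 5 (op2 σ A) (op2 σ B) (op2 σ C) = true)
    (ha : |a| ≤ 1) (hb : |b| ≤ 1) (hc : |c| ≤ 1) (x : ℝ) (hx : 0 < x)
    (h0 : 0 ≤ σ * (Real.log x - Real.log K)) (h1 : σ * (Real.log x - Real.log K) ≤ 1) :
    |tr0 σ K a b c A B C x| ≤ 10 / 9 ∧ x * |tr1 σ K a b c A B C x| ≤ 7 / 3 ∧
      x ^ 2 * |tr2 σ K a b c A B C x| ≤ 41 / 5 := by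
  have hσ' : |(σ : ℝ)| = 1 := by
    have : (σ : ℝ) * σ = 1 := by exact_mod_cast hσ
    have h2 : |(σ : ℝ)| * |(σ : ℝ)| = 1 := by rw [← abs_mul, this, abs_one]
    nlinarith [abs_nonneg (σ : ℝ)]
  refine ⟨?_, ?_, ?_⟩
  · simpa [tr0] using lc_bound 10 9 (by norm_num) A B C k0 a b c _ h0 h1 ha hb hc
  · have := lc_bound 7 3 (by norm_num) _ _ _ k1 a b c _ h0 h1 ha hb hc
    rw [tr1, abs_div, abs_mul, hσ', abs_of_pos hx, one_mul, mul_div_cancel₀ _ hx.ne']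
    simpa using this
  · have := lc_bound 41 5 (by norm_num) _ _ _ k2 a b c _ h0 h1 ha hb hc
    have hx2 : 0 < x ^ 2 := by positivity
    rw [tr2, abs_div, abs_of_pos hx2, mul_div_cancel₀ _ hx2.ne']
    simpa using this

lemma R_at_K (K a b c : ℝ) :
    tr0 1 K a b c RA RB RC K = a ∧ tr1 1 K a b c RA RB RC K = b / K ∧
      tr2 1 K a b c RA RB RC K = c / K ^ 2 := by
  refine ⟨?_, ?_, ?_⟩ <;>
  simp [tr0, tr1, tr2, lc, op2, RA, RB, RC, der, addL, smulL, ev]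

lemma L_at_K (K a b c : ℝ) :
    tr0 (-1) K a b c LA LB LC K = a ∧ tr1 (-1) K a b c LA LB LC K = b / K ∧
      tr2 (-1) K a b c LA LB LC K = c / K ^ 2 := by
  refine ⟨?_, ?_, ?_⟩ <;>
  simp [tr0, tr1, tr2, lc, op2, LA, LB, LC, der, addL, smulL, ev] <;> ring

lemma R_at_end (K a b c x : ℝ) (hx : Real.log x - Real.log K = 1) :
    tr0 1 K a b c RA RB RC x = 0 ∧ tr1 1 K a b c RA RB RC x = 0 ∧
      tr2 1 K a b c RA RB RC x = 0 := by
  refine ⟨?_, ?_, ?_⟩ <;>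
  simp only [tr0, tr1, tr2, hx] <;>
  norm_num [lc, op2, RA, RB, RC, der, addL, smulL, ev]

lemma L_at_end (K a b c x : ℝ) (hx : Real.log x - Real.log K = -1) :
    tr0 (-1) K a b c LA LB LC x = 0 ∧ tr1 (-1) K a b c LA LB LC x = 0 ∧
      tr2 (-1) K a b c LA LB LC x = 0 := by
  refine ⟨?_, ?_, ?_⟩ <;>
  simp only [tr0, tr1, tr2, hx] <;>
  norm_num [lc, op2, LA, LB, LC, der, addL, smulL, ev]

/-- five-piece gluing -/
noncomputable def glue5 (p q r s : ℝ) (u v w : ℝ → ℝ) (x : ℝ) : ℝ :=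
  if x ≤ p then 0 else if x ≤ q then u x else if x ≤ r then v x else if x ≤ s then w x else 0

section
variable {p q r s : ℝ} {u v w : ℝ → ℝ}

lemma glue5_0 {x : ℝ} (hx : x ≤ p) : glue5 p q r s u v w x = 0 := by simp [glue5, hx]

lemma glue5_1 (h : u p = 0) {x : ℝ} (hx : x ∈ Icc p q) : glue5 p q r s u v w x = u x := by
  rcases hx.1.eq_or_lt with e | e
  · subst e; simp [glue5, h]
  · simp [glue5, hx.2, not_le.2 e]

lemma glue5_2 (hpq : p < q) (h : u q = v q) {x : ℝ} (hx : x ∈ Icc q r) :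
    glue5 p q r s u v w x = v x := by
  rcases hx.1.eq_or_lt with e | e
  · subst e; simp [glue5, h, not_le.2 hpq]
  · simp [glue5, hx.2, not_le.2 e, not_le.2 (hpq.trans e)]

lemma glue5_3 (hpq : p < q) (hqr : q < r) (h : v r = w r) {x : ℝ} (hx : x ∈ Icc r s) :
    glue5 p q r s u v w x = w x := by
  rcases hx.1.eq_or_lt with e | e
  · subst e; simp [glue5, h, not_le.2 hqr, not_le.2 (hpq.trans hqr)]
  · simp [glue5, hx.2, not_le.2 e, not_le.2 (hqr.trans e), not_le.2 (hpq.trans (hqr.trans e))]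

lemma glue5_4 (hpq : p < q) (hqr : q < r) (hrs : r < s) (h : w s = 0) {x : ℝ} (hx : s ≤ x) :
    glue5 p q r s u v w x = 0 := by
  rcases hx.eq_or_lt with e | e
  · subst e
    simp [glue5, h, not_le.2 hrs, not_le.2 (hqr.trans hrs), not_le.2 (hpq.trans (hqr.trans hrs))]
  · simp [glue5, not_le.2 e, not_le.2 (hrs.trans e), not_le.2 (hqr.trans (hrs.trans e)),
      not_le.2 (hpq.trans (hqr.trans (hrs.trans e)))]
end

end ExtPoly

open ExtPoly

theorem stmt1 (N : ℕ) (hN : 2 ≤ N) (f : ℝ → ℝ)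
    (hf : ContDiffOn ℝ 2 f (Icc 1 (N:ℝ)))
    (hf0 : ∀ x ∈ Icc (1:ℝ) (N:ℝ), |f x| ≤ 1)
    (hf1 : ∀ x ∈ Icc (1:ℝ) (N:ℝ), x * |derivWithin f (Icc 1 (N:ℝ)) x| ≤ 1)
    (hf2 : ∀ x ∈ Icc (1:ℝ) (N:ℝ),
      x ^ 2 * |derivWithin (derivWithin f (Icc 1 (N:ℝ))) (Icc 1 (N:ℝ)) x| ≤ 1) :
    ∃ g : ℝ → ℝ, ContDiffOn ℝ 2 g (Ioi 0) ∧
      (∀ x ∈ Icc (1:ℝ) (N:ℝ), g x = f x) ∧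
      (∀ x ∈ Ioi (0:ℝ), x ∉ Icc (Real.exp (-1)) (Real.exp 1 * N) → g x = 0) ∧
      ∀ x ∈ Ioi (0:ℝ),
        |g x| ≤ 10/9 ∧ x * |derivWithin g (Ioi 0) x| ≤ 7/3 ∧
        x ^ 2 * |derivWithin (derivWithin g (Ioi 0)) (Ioi 0) x| ≤ 41/5 := by
  have hN1 : (1 : ℝ) < N := by exact_mod_cast (by omega : 1 < N)
  have hN0 : (0 : ℝ) < N := by linarith
  set I := Icc (1 : ℝ) (N : ℝ) with hI
  set f1 := derivWithin f I with hf1d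
  set f2 := derivWithin f1 I with hf2d
  have hU : UniqueDiffOn ℝ I := uniqueDiffOn_Icc hN1
  have h1I : (1 : ℝ) ∈ I := ⟨le_rfl, hN1.le⟩
  have hNI : (N : ℝ) ∈ I := ⟨hN1.le, le_rfl⟩
  have hfC : C2 I f f1 f2 := by
    have e : (2 : WithTop ℕ∞) = 1 + 1 := by norm_num
    rw [e, contDiffOn_succ_iff_derivWithin hU] at hf
    obtain ⟨d0, -, h1⟩ := hf
    have e1 : (1 : WithTop ℕ∞) = 0 + 1 := by norm_num
    rw [e1, contDiffOn_succ_iff_derivWithin hU] at h1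
    obtain ⟨d1, -, h2⟩ := h1
    exact ⟨fun x hx => (d0 x hx).hasDerivWithinAt, fun x hx => (d1 x hx).hasDerivWithinAt,
      h2.continuousOn⟩
  set p := Real.exp (-1) with hp
  set s := Real.exp 1 * N with hs
  have hp0 : 0 < p := Real.exp_pos _
  have hpq : p < 1 := by rw [hp, Real.exp_lt_one_iff]; norm_num
  have hrs : (N : ℝ) < s := by
    have : 1 < Real.exp 1 := Real.one_lt_exp_iff.2 one_pos
    rw [hs]; nlinarith
  have hlp : Real.log p - Real.log 1 = -1 := by rw [hp, Real.log_exp]; simp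
  have hls : Real.log s - Real.log N = 1 := by
    rw [hs, Real.log_mul (Real.exp_pos _).ne' hN0.ne', Real.log_exp]; ring
  -- the data at the endpoints
  obtain ⟨l0, l1, l2⟩ := L_at_K 1 (f 1) (1 * f1 1) (1 ^ 2 * f2 1)
  obtain ⟨l0', l1', l2'⟩ := L_at_end 1 (f 1) (1 * f1 1) (1 ^ 2 * f2 1) p hlp
  obtain ⟨r0, r1, r2⟩ := R_at_K N (f N) (N * f1 N) (N ^ 2 * f2 N)
  obtain ⟨r0', r1', r2'⟩ := R_at_end N (f N) (N * f1 N) (N ^ 2 * f2 N) s hls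
  have hLC := C2_tr (-1) (by norm_num) 1 (f 1) (1 * f1 1) (1 ^ 2 * f2 1) LA LB LC (Icc p 1)
    (fun x hx => hp0.trans_le hx.1)
  have hRC := C2_tr 1 (by norm_num) N (f N) (N * f1 N) (N ^ 2 * f2 N) RA RB RC (Icc N s)
    (fun x hx => hN0.trans_le hx.1)
  have hLb := fun x hx h0 h1 => tr_bound (-1) (by norm_num) 1 (f 1) (1 * f1 1) (1 ^ 2 * f2 1)
    LA LB LC okL0 okL1 okL2 (hf0 1 h1I) (by simpa using hf1 1 h1I)
    (by simpa using hf2 1 h1I) x hx h0 h1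
  have hRb := fun x hx h0 h1 => tr_bound 1 (by norm_num) N (f N) (N * f1 N) (N ^ 2 * f2 N)
    RA RB RC okR0 okR1 okR2 (hf0 N hNI)
    (by rw [abs_mul, abs_of_pos hN0]; exact hf1 N hNI)
    (by rw [abs_mul, abs_of_pos (by positivity : (0 : ℝ) < (N : ℝ) ^ 2)]; exact hf2 N hNI)
    x hx h0 h1
  generalize tr0 (-1) 1 (f 1) (1 * f1 1) (1 ^ 2 * f2 1) LA LB LC = u0 at *
  generalize tr1 (-1) 1 (f 1) (1 * f1 1) (1 ^ 2 * f2 1) LA LB LC = u1 at *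
  generalize tr2 (-1) 1 (f 1) (1 * f1 1) (1 ^ 2 * f2 1) LA LB LC = u2 at *
  generalize tr0 1 N (f N) (N * f1 N) (N ^ 2 * f2 N) RA RB RC = w0 at *
  generalize tr1 1 N (f N) (N * f1 N) (N ^ 2 * f2 N) RA RB RC = w1 at *
  generalize tr2 1 N (f N) (N * f1 N) (N ^ 2 * f2 N) RA RB RC = w2 at *
  have l1 : u1 1 = f1 1 := by rw [l1]; simp
  have l2 : u2 1 = f2 1 := by rw [l2]; simp
  have r0 : f N = w0 N := r0.symm
  have r1 : f1 N = w1 N := by rw [r1]; field_simp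
  have r2 : f2 N = w2 N := by rw [r2]; field_simp
  set g := glue5 p 1 N s u0 f w0 with hg
  set g1 := glue5 p 1 N s u1 f1 w1 with hg1
  set g2 := glue5 p 1 N s u2 f2 w2 with hg2
  have hall : C2 univ g g1 g2 := by
    have c0 : C2 (Iic p) g g1 g2 := (C2_zero _).congr (fun x hx => glue5_0 hx)
      (fun x hx => glue5_0 hx) (fun x hx => glue5_0 hx)
    have c1 : C2 (Icc p 1) g g1 g2 := hLC.congr (fun x hx => glue5_1 l0' hx)
      (fun x hx => glue5_1 l1' hx) (fun x hx => glue5_1 l2' hx)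
    have c2 : C2 I g g1 g2 := hfC.congr (fun x hx => glue5_2 hpq l0 hx)
      (fun x hx => glue5_2 hpq l1 hx) (fun x hx => glue5_2 hpq l2 hx)
    have c3 : C2 (Icc N s) g g1 g2 := hRC.congr (fun x hx => glue5_3 hpq hN1 r0 hx)
      (fun x hx => glue5_3 hpq hN1 r1 hx) (fun x hx => glue5_3 hpq hN1 r2 hx)
    have c4 : C2 (Ici s) g g1 g2 := (C2_zero _).congr
      (fun x hx => glue5_4 hpq hN1 hrs r0' hx)
      (fun x hx => glue5_4 hpq hN1 hrs r1' hx) (fun x hx => glue5_4 hpq hN1 hrs r2' hx)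
    have c01 := c0.union isClosed_Iic isClosed_Icc c1
    rw [Iic_union_Icc_eq_Iic hpq.le] at c01
    have c02 := c01.union isClosed_Iic isClosed_Icc c2
    rw [Iic_union_Icc_eq_Iic hN1.le] at c02
    have c03 := c02.union isClosed_Iic isClosed_Icc c3
    rw [Iic_union_Icc_eq_Iic hrs.le] at c03
    have c04 := c03.union isClosed_Iic isClosed_Ici c4
    rwa [Iic_union_Ici] at c04
  have d0 : ∀ x, HasDerivAt g (g1 x) x := fun x =>
    hasDerivWithinAt_univ.1 (hall.1 x (mem_univ x))
  have d1 : ∀ x, HasDerivAt g1 (g2 x) x := fun x =>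
    hasDerivWithinAt_univ.1 (hall.2.1 x (mem_univ x))
  have d2 : Continuous g2 := continuousOn_univ.1 hall.2.2
  have e1 : deriv g = g1 := funext fun x => (d0 x).deriv
  have e2 : deriv g1 = g2 := funext fun x => (d1 x).deriv
  have D1 : ∀ x ∈ Ioi (0 : ℝ), derivWithin g (Ioi 0) x = g1 x := fun x hx =>
    (d0 x).hasDerivWithinAt.derivWithin (isOpen_Ioi.uniqueDiffOn x hx)
  have D2 : ∀ x ∈ Ioi (0 : ℝ), derivWithin (derivWithin g (Ioi 0)) (Ioi 0) x = g2 x := by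
    intro x hx
    rw [derivWithin_congr D1 (D1 x hx)]
    exact (d1 x).hasDerivWithinAt.derivWithin (isOpen_Ioi.uniqueDiffOn x hx)
  refine ⟨g, ?_, fun x hx => glue5_2 hpq l0 hx, ?_, ?_⟩
  · apply ContDiff.contDiffOn
    have e : (2 : WithTop ℕ∞) = 1 + 1 := by norm_num
    rw [e, contDiff_succ_iff_deriv, e1]
    refine ⟨fun x => (d0 x).differentiableAt, by simp, ?_⟩
    rw [contDiff_one_iff_deriv, e2]
    exact ⟨fun x => (d1 x).differentiableAt, d2⟩
  · intro x _ hx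
    rcases lt_or_ge x p with h | h
    · exact glue5_0 h.le
    · have : s ≤ x := by
        by_contra hc
        exact hx ⟨h, (not_le.1 hc).le⟩
      exact glue5_4 hpq hN1 hrs r0' this
  · intro x hx
    rw [D1 x hx, D2 x hx]
    have hx0 : 0 < x := hx
    rcases le_total x p with h | h
    · have a0 : g x = 0 := glue5_0 h
      have a1 : g1 x = 0 := glue5_0 h
      have a2 : g2 x = 0 := glue5_0 h
      rw [a0, a1, a2]; norm_num
    rcases le_total x 1 with h' | h'
    · have a0 : g x = u0 x := glue5_1 l0' ⟨h, h'⟩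
      have a1 : g1 x = u1 x := glue5_1 l1' ⟨h, h'⟩
      have a2 : g2 x = u2 x := glue5_1 l2' ⟨h, h'⟩
      rw [a0, a1, a2]
      have m1 := Real.log_le_log hp0 h
      have m2 := Real.log_le_log hx0 h'
      refine hLb x hx0 ?_ ?_ <;> push_cast <;> linarith
    rcases le_total x N with h'' | h''
    · have a0 : g x = f x := glue5_2 hpq l0 ⟨h', h''⟩
      have a1 : g1 x = f1 x := glue5_2 hpq l1 ⟨h', h''⟩
      have a2 : g2 x = f2 x := glue5_2 hpq l2 ⟨h', h''⟩
      rw [a0, a1, a2]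
      exact ⟨(hf0 x ⟨h', h''⟩).trans (by norm_num), (hf1 x ⟨h', h''⟩).trans (by norm_num),
        (hf2 x ⟨h', h''⟩).trans (by norm_num)⟩
    rcases le_total x s with h3 | h3
    · have a0 : g x = w0 x := glue5_3 hpq hN1 r0 ⟨h'', h3⟩
      have a1 : g1 x = w1 x := glue5_3 hpq hN1 r1 ⟨h'', h3⟩
      have a2 : g2 x = w2 x := glue5_3 hpq hN1 r2 ⟨h'', h3⟩
      rw [a0, a1, a2]
      have m1 := Real.log_le_log hN0 h''
      have m2 := Real.log_le_log hx0 h3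
      refine hRb x hx0 ?_ ?_ <;> push_cast <;> linarith
    · have a0 : g x = 0 := glue5_4 hpq hN1 hrs r0' h3
      have a1 : g1 x = 0 := glue5_4 hpq hN1 hrs r1' h3
      have a2 : g2 x = 0 := glue5_4 hpq hN1 hrs r2' h3
      rw [a0, a1, a2]; norm_num
end

section
/- (Montgomery–Hilbert inequality) Suppose λ₁, …, λ_N are distinct real numbers and x₁, …, x_N, y₁, …, y_N are complex numbers. Then |Σ_{m≠n} x_m y_n / (λ_m − λ_n)| ≤ (3π/2) (Σ_m |x_m|²/δ_m)^{1/2} (Σ_n |y_n|²/δ_n)^{1/2}, where δ_n = min_{m≠n} |λ_m − λ_n|. -/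
namespace MH

lemma tele {ι : Type*} [DecidableEq ι] (l r : ι → ℝ) (F : ℝ → ℝ) (m : ℝ) : ∀ (n : ℕ) (S : Finset ι) (M : ℝ),
    S.card = n →
    (∀ i ∈ S, l i < r i) → (∀ i ∈ S, ∀ j ∈ S, i ≠ j → r i ≤ l j ∨ r j ≤ l i) →
    (∀ i ∈ S, ∀ j ∈ S, r j ≤ l i → F (r j) ≤ F (l i)) →
    (∀ i ∈ S, m ≤ F (l i)) → (∀ i ∈ S, F (r i) ≤ M) → m ≤ M →
    ∑ i ∈ S, (F (r i) - F (l i)) ≤ M - m := by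
  intro n
  induction n with
  | zero =>
    intro S M hc _ _ _ _ _ hmM
    rw [Finset.card_eq_zero] at hc
    subst hc
    simpa using hmM
  | succ n ih =>
    intro S M hc hlr hd hF hm hM hmM
    have hne : S.Nonempty := by
      rw [← Finset.card_pos]; omega
    obtain ⟨i, hi, hmax⟩ := S.exists_max_image r hne
    have h1 := ih (S.erase i) (F (l i)) (by rw [Finset.card_erase_of_mem hi]; omega)
      (fun j hj => hlr j (Finset.mem_of_mem_erase hj))
      (fun j hj k hk => hd j (Finset.mem_of_mem_erase hj) k (Finset.mem_of_mem_erase hk))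
      (fun j hj k hk => hF j (Finset.mem_of_mem_erase hj) k (Finset.mem_of_mem_erase hk))
      (fun j hj => hm j (Finset.mem_of_mem_erase hj))
      (fun j hj => by
        have hjS := Finset.mem_of_mem_erase hj
        have hji := Finset.ne_of_mem_erase hj
        apply hF i hi j hjS
        rcases hd j hjS i hi hji with h | h
        · exact h
        · have := hmax j hjS
          have := hlr j hjS
          linarith)
      (hm i hi)
    rw [← Finset.add_sum_erase S _ hi]
    have := hM i hi
    linarith

lemma midpt (F f : ℝ → ℝ) (x h : ℝ) (hh : 0 ≤ h)
    (hF : ∀ y, x - h ≤ y → y ≤ x + h → HasDerivAt F (f y) y)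
    (hc : ∀ k, 0 ≤ k → k ≤ h → 2 * f x ≤ f (x + k) + f (x - k)) :
    2 * h * f x ≤ F (x + h) - F (x - h) := by
  have hG : ∀ k ∈ Set.Icc 0 h, HasDerivAt (fun k => F (x + k) - F (x - k) - 2 * k * f x)
      (f (x + k) + f (x - k) - 2 * f x) k := by
    intro k ⟨hk0, hk⟩
    have h1 : HasDerivAt (fun k => F (x + k)) (f (x + k)) k := by
      simpa using (hF (x + k) (by linarith) (by linarith)).comp_const_add x k
    have h2 : HasDerivAt (fun k => F (x - k)) (-f (x - k)) k := by
      simpa using (hF (x - k) (by linarith) (by linarith)).comp_const_sub x k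
    have h3 : HasDerivAt (fun k : ℝ => 2 * k * f x) (2 * f x) k := by
      simpa using ((hasDerivAt_id k).const_mul 2).mul_const (f x)
    refine ((h1.sub h2).sub h3).congr_deriv ?_
    ring
  have hmono : MonotoneOn (fun k => F (x + k) - F (x - k) - 2 * k * f x) (Set.Icc 0 h) := by
    apply monotoneOn_of_deriv_nonneg (convex_Icc 0 h)
    · intro k hk
      exact (hG k hk).continuousAt.continuousWithinAt
    · intro k hk
      exact (hG k (interior_subset hk)).differentiableAt.differentiableWithinAt
    · intro k hk
      have hk' := interior_subset hk
      rw [(hG k hk').deriv]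
      have := hc k hk'.1 hk'.2
      linarith
  have := hmono (Set.left_mem_Icc.2 hh) (Set.right_mem_Icc.2 hh) hh
  simp at this
  linarith

lemma comp {ι : Type*} [DecidableEq ι] (S : Finset ι) (a h : ι → ℝ) (U : Set ℝ) (hU : Convex ℝ U)
    (F p : ℝ → ℝ) (hp : ∀ x ∈ U, p x ≠ 0) (hF : ∀ x ∈ U, HasDerivAt F (1 / p x ^ 2) x)
    (hmid : ∀ x k, x ∈ U → x + k ∈ U → x - k ∈ U → |p (x + k) * p (x - k)| ≤ p x ^ 2)
    (hh : ∀ i ∈ S, 0 < h i) (hl : ∀ i ∈ S, a i - h i ∈ U) (hr : ∀ i ∈ S, a i + h i ∈ U)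
    (disj : ∀ i ∈ S, ∀ j ∈ S, i ≠ j → h i + h j ≤ |a i - a j|)
    (m M : ℝ) (hm : ∀ i ∈ S, m ≤ F (a i - h i)) (hM : ∀ i ∈ S, F (a i + h i) ≤ M) (hmM : m ≤ M) :
    ∑ i ∈ S, 2 * h i / p (a i) ^ 2 ≤ M - m := by
  have hoc : U.OrdConnected := hU.ordConnected
  have hmono : MonotoneOn F U := by
    apply monotoneOn_of_deriv_nonneg hU
    · intro k hk
      exact (hF k hk).continuousAt.continuousWithinAt
    · intro k hk
      exact (hF k (interior_subset hk)).differentiableAt.differentiableWithinAt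
    · intro k hk
      rw [(hF k (interior_subset hk)).deriv]
      positivity
  refine le_trans (Finset.sum_le_sum ?_) (tele (fun i => a i - h i) (fun i => a i + h i) F m S.card S M rfl
    ?_ ?_ ?_ hm hM hmM)
  · intro i hi
    have hhi := hh i hi
    have key : ∀ y, a i - h i ≤ y → y ≤ a i + h i → y ∈ U := fun y h1 h2 =>
      hoc.out (hl i hi) (hr i hi) ⟨h1, h2⟩
    have := midpt F (fun x => 1 / p x ^ 2) (a i) (h i) hhi.le (fun y h1 h2 => hF y (key y h1 h2)) ?_
    · calc 2 * h i / p (a i) ^ 2 = 2 * h i * (1 / p (a i) ^ 2) := by ring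
        _ ≤ _ := this
    · intro k hk0 hk
      have m0 := key (a i) (by linarith) (by linarith)
      have m1 := key (a i + k) (by linarith) (by linarith)
      have m2 := key (a i - k) (by linarith) (by linarith)
      have q0 := hp _ m0
      have q1 := hp _ m1
      have q2 := hp _ m2
      have hb := hmid (a i) k m0 m1 m2
      have hpos : 0 < |p (a i + k) * p (a i - k)| := abs_pos.2 (mul_ne_zero q1 q2)
      have h1 : 1 / p (a i) ^ 2 ≤ 1 / |p (a i + k) * p (a i - k)| :=
        one_div_le_one_div_of_le hpos hb
      have h2 : 2 * (1 / |p (a i + k) * p (a i - k)|) ≤ 1 / p (a i + k) ^ 2 + 1 / p (a i - k) ^ 2 := by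
        have := sq_nonneg (1 / |p (a i + k)| - 1 / |p (a i - k)|)
        have e1 : (1 / |p (a i + k)|) ^ 2 = 1 / p (a i + k) ^ 2 := by
          rw [div_pow, sq_abs]; simp
        have e2 : (1 / |p (a i - k)|) ^ 2 = 1 / p (a i - k) ^ 2 := by
          rw [div_pow, sq_abs]; simp
        have e3 : 1 / |p (a i + k) * p (a i - k)| = (1 / |p (a i + k)|) * (1 / |p (a i - k)|) := by
          rw [abs_mul]; simp [mul_comm]
        rw [← e1, ← e2, e3]
        linarith
      linarith
  · intro i hi
    have := hh i hi
    linarith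
  · intro i hi j hj hij
    have := disj i hi j hj hij
    rcases le_total (a i) (a j) with h' | h'
    · left
      rw [abs_of_nonpos (by linarith)] at this
      linarith
    · right
      rw [abs_of_nonneg (by linarith)] at this
      linarith
  · intro i hi j hj hij
    exact hmono (hr j hj) (hl i hi) hij

/-- one-pole sum -/
lemma onePole {ι : Type*} [DecidableEq ι] (S : Finset ι) (a h : ι → ℝ) (b : ℝ) (hb : 0 < b)
    (F p : ℝ → ℝ) (hp0 : p 0 = 0) (hp : ∀ x ≠ 0, p x ≠ 0) (hF : ∀ x ≠ 0, HasDerivAt F (1 / p x ^ 2) x)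
    (hmid : ∀ x k, |k| ≤ |x| → |p (x + k) * p (x - k)| ≤ p x ^ 2)
    (hneg : ∀ x < 0, 0 ≤ F x) (hpos : ∀ x > 0, F x ≤ 0)
    (hmn : ∀ x y, 0 < x → x ≤ y → F x ≤ F y) (hmn' : ∀ x y, y < 0 → x ≤ y → F x ≤ F y)
    (hh : ∀ i ∈ S, 0 < h i) (ha : ∀ i ∈ S, a i ≠ 0 → h i + b ≤ |a i|)
    (disj : ∀ i ∈ S, ∀ j ∈ S, i ≠ j → h i + h j ≤ |a i - a j|) :
    ∑ i ∈ S, 2 * h i / p (a i) ^ 2 ≤ F (-b) - F b := by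
  have e : ∀ i ∈ S, 2 * h i / p (a i) ^ 2 = (if a i < 0 then 2 * h i / p (a i) ^ 2 else 0) +
      (if 0 < a i then 2 * h i / p (a i) ^ 2 else 0) := by
    intro i hi
    rcases lt_trichotomy (a i) 0 with h | h | h
    · simp [h, h.not_gt]
    · simp [h, hp0]
    · simp [h, h.not_gt]
  rw [Finset.sum_congr rfl e, Finset.sum_add_distrib, ← Finset.sum_filter, ← Finset.sum_filter]
  have h1 : ∑ i ∈ S with a i < 0, 2 * h i / p (a i) ^ 2 ≤ F (-b) - 0 := by
    have loc : ∀ i ∈ S.filter (fun i => a i < 0), a i + h i ≤ -b ∧ 0 < h i := by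
      intro i hi
      rw [Finset.mem_filter] at hi
      have := ha i hi.1 hi.2.ne
      rw [abs_of_neg hi.2] at this
      exact ⟨by linarith, hh i hi.1⟩
    refine comp _ a h (Set.Iio 0) (convex_Iio 0) F p (fun x hx => hp x (ne_of_lt hx))
      (fun x hx => hF x (ne_of_lt hx)) ?_ (fun i hi => (loc i hi).2) ?_ ?_ ?_ _ _ ?_ ?_ ?_
    · intro x k hx h1 h2
      simp only [Set.mem_Iio] at *
      apply hmid
      rw [abs_of_neg hx]
      exact abs_le.2 ⟨by linarith, by linarith⟩
    · intro i hi
      have := loc i hi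
      simp only [Set.mem_Iio]; linarith
    · intro i hi
      have := loc i hi
      simp only [Set.mem_Iio]; linarith
    · intro i hi j hj
      exact disj i (Finset.mem_filter.1 hi).1 j (Finset.mem_filter.1 hj).1
    · intro i hi
      have := loc i hi
      apply hneg; linarith
    · intro i hi
      have := loc i hi
      apply hmn' <;> linarith
    · apply hneg; linarith
  have h2 : ∑ i ∈ S with 0 < a i, 2 * h i / p (a i) ^ 2 ≤ 0 - F b := by
    have loc : ∀ i ∈ S.filter (fun i => 0 < a i), b ≤ a i - h i ∧ 0 < h i := by
      intro i hi
      rw [Finset.mem_filter] at hi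
      have := ha i hi.1 hi.2.ne'
      rw [abs_of_pos hi.2] at this
      exact ⟨by linarith, hh i hi.1⟩
    refine comp _ a h (Set.Ioi 0) (convex_Ioi 0) F p (fun x hx => hp x (ne_of_gt hx))
      (fun x hx => hF x (ne_of_gt hx)) ?_ (fun i hi => (loc i hi).2) ?_ ?_ ?_ _ _ ?_ ?_ ?_
    · intro x k hx h1 h2
      simp only [Set.mem_Ioi] at *
      apply hmid
      rw [abs_of_pos hx]
      exact abs_le.2 ⟨by linarith, by linarith⟩
    · intro i hi
      have := loc i hi
      simp only [Set.mem_Ioi]; linarith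
    · intro i hi
      have := loc i hi
      simp only [Set.mem_Ioi]; linarith
    · intro i hi j hj
      exact disj i (Finset.mem_filter.1 hi).1 j (Finset.mem_filter.1 hj).1
    · intro i hi
      have := loc i hi
      apply hmn <;> linarith
    · intro i hi
      have := loc i hi
      apply hpos; linarith
    · apply hpos; linarith
  linarith

lemma sum2 {ι : Type*} [DecidableEq ι] (S : Finset ι) (a h : ι → ℝ) (b : ℝ) (hb : 0 < b)
    (hh : ∀ i ∈ S, 0 < h i) (ha : ∀ i ∈ S, a i ≠ 0 → h i + b ≤ |a i|)
    (disj : ∀ i ∈ S, ∀ j ∈ S, i ≠ j → h i + h j ≤ |a i - a j|) :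
    ∑ i ∈ S, 2 * h i / (a i) ^ 2 ≤ 2 / b := by
  have := onePole S a h b hb (fun x => -x⁻¹) (fun x => x) rfl (fun x hx => hx) ?_ ?_ ?_ ?_ ?_ ?_ hh ha disj
  · refine this.trans (le_of_eq ?_)
    simp only [inv_neg]
    ring
  · intro x hx
    exact ((hasDerivAt_inv hx).neg).congr_deriv (by simp)
  · intro x k hk
    have := sq_le_sq.2 hk
    rw [abs_le]; constructor <;> nlinarith [sq_nonneg k]
  · intro x hx
    have := inv_lt_zero.2 hx
    linarith
  · intro x hx
    have := inv_pos.2 hx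
    linarith
  · intro x y hx hxy
    have := inv_anti₀ hx hxy
    linarith
  · intro x y hx hxy
    have := inv_anti₀ (neg_pos.2 hx) (neg_le_neg hxy)
    simp only [inv_neg] at *; linarith

lemma sum4 {ι : Type*} [DecidableEq ι] (S : Finset ι) (a h : ι → ℝ) (b : ℝ) (hb : 0 < b)
    (hh : ∀ i ∈ S, 0 < h i) (ha : ∀ i ∈ S, a i ≠ 0 → h i + b ≤ |a i|)
    (disj : ∀ i ∈ S, ∀ j ∈ S, i ≠ j → h i + h j ≤ |a i - a j|) :
    ∑ i ∈ S, 2 * h i / ((a i) ^ 2) ^ 2 ≤ 2 / (3 * b ^ 3) := by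
  have := onePole S a h b hb (fun x => -(x⁻¹) ^ 3 / 3) (fun x => x ^ 2) (by simp)
    (fun x hx => pow_ne_zero 2 hx) ?_ ?_ ?_ ?_ ?_ ?_ hh ha disj
  · refine this.trans (le_of_eq ?_)
    simp only [inv_neg]
    field_simp
    ring
  · intro x hx
    refine ((((hasDerivAt_inv hx).pow 3).neg).div_const 3).congr_deriv ?_
    field_simp
    norm_num
    field_simp
  · intro x k hk
    have := sq_le_sq.2 hk
    have h1 : |(x + k) * (x - k)| ≤ x ^ 2 := by
      rw [abs_le]; constructor <;> nlinarith [sq_nonneg k]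
    have h2 := pow_le_pow_left₀ (abs_nonneg _) h1 2
    rw [← mul_pow, abs_pow]
    exact h2
  · intro x hx
    have := pow_pos (inv_pos.2 (neg_pos.2 hx)) 3
    simp only [inv_neg] at *; nlinarith
  · intro x hx
    have := pow_pos (inv_pos.2 hx) 3
    linarith
  · intro x y hx hxy
    have := pow_le_pow_left₀ (inv_pos.2 (hx.trans_le hxy)).le (inv_anti₀ hx hxy) 3
    linarith
  · intro x y hx hxy
    have := pow_le_pow_left₀ (inv_pos.2 (by linarith)).le (inv_anti₀ (neg_pos.2 hx) (neg_le_neg hxy)) 3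
    simp only [inv_neg] at *; nlinarith


lemma log_aux (q : ℝ) (hq : 1 ≤ q) : 2 * Real.log q ≤ q - q⁻¹ := by
  have h := Real.self_le_sinh_iff.2 (Real.log_nonneg hq)
  rw [Real.sinh_log (by linarith)] at h
  linarith

lemma twoPole {ι : Type*} [DecidableEq ι] (S : Finset ι) (a h : ι → ℝ) (b b' d : ℝ) (hb : 0 < b)
    (hb' : 0 < b') (hd : b + b' ≤ d)
    (hh : ∀ i ∈ S, 0 < h i) (ha : ∀ i ∈ S, a i ≠ 0 → h i + b ≤ |a i|)
    (had : ∀ i ∈ S, a i ≠ d → h i + b' ≤ |a i - d|)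
    (disj : ∀ i ∈ S, ∀ j ∈ S, i ≠ j → h i + h j ≤ |a i - a j|) :
    ∑ i ∈ S, 2 * h i / (a i * (a i - d)) ^ 2 ≤ (2 / b + 2 / b') / d ^ 2 := by
  have hd0 : 0 < d := by linarith
  set F : ℝ → ℝ := fun x => (1 / d ^ 2) * (-x⁻¹ - (x - d)⁻¹ - (2 / d) * (Real.log (x - d) - Real.log x))
    with hFdef
  set p : ℝ → ℝ := fun x => x * (x - d) with hpdef
  have hF : ∀ x, x ≠ 0 → x - d ≠ 0 → HasDerivAt F (1 / p x ^ 2) x := by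
    intro x hx hxd
    have e1 := (hasDerivAt_inv hx).neg
    have e2 : HasDerivAt (fun x : ℝ => (x - d)⁻¹) (-((x - d) ^ 2)⁻¹) x := by
      simpa using (hasDerivAt_inv hxd).comp_sub_const x d
    have e3 := Real.hasDerivAt_log hx
    have e4 : HasDerivAt (fun x : ℝ => Real.log (x - d)) ((x - d)⁻¹) x := by
      simpa using (Real.hasDerivAt_log hxd).comp_sub_const x d
    refine (((e1.sub e2).sub ((e4.sub e3).const_mul (2 / d))).const_mul (1 / d ^ 2)).congr_deriv ?_
    simp only [hpdef]
    field_simp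
    ring
  have hmid : ∀ x k, |k| ≤ |x| → |k| ≤ |x - d| → |p (x + k) * p (x - k)| ≤ p x ^ 2 := by
    intro x k h1 h2
    have h1 := sq_le_sq.2 h1
    have h2 := sq_le_sq.2 h2
    have h3 : |(x + k) * (x - k)| ≤ x ^ 2 := by
      rw [abs_le]; constructor <;> nlinarith [sq_nonneg k]
    have h4 : |(x - d + k) * (x - d - k)| ≤ (x - d) ^ 2 := by
      rw [abs_le]; constructor <;> nlinarith [sq_nonneg k]
    have h5 := mul_le_mul h3 h4 (abs_nonneg _) (sq_nonneg _)
    rw [← abs_mul] at h5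
    calc |p (x + k) * p (x - k)| = |(x + k) * (x - k) * ((x - d + k) * (x - d - k))| := by
          simp only [hpdef]; congr 1; ring
      _ ≤ _ := h5
      _ = _ := by simp only [hpdef]; ring
  have hmonoU : ∀ U : Set ℝ, Convex ℝ U → (∀ x ∈ U, x ≠ 0 ∧ x - d ≠ 0) → MonotoneOn F U := by
    intro U hU hne
    apply monotoneOn_of_deriv_nonneg hU
    · intro k hk
      exact (hF k (hne k hk).1 (hne k hk).2).continuousAt.continuousWithinAt
    · intro k hk
      have hk := interior_subset hk
      exact (hF k (hne k hk).1 (hne k hk).2).differentiableAt.differentiableWithinAt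
    · intro k hk
      have hk := interior_subset hk
      rw [(hF k (hne k hk).1 (hne k hk).2).deriv]
      positivity
  have hneg : ∀ x < 0, 0 ≤ F x := by
    intro x hx
    have hq : 1 ≤ (x - d) / x := by
      rw [le_div_iff_of_neg hx]; linarith
    have hl := log_aux _ hq
    rw [Real.log_div (by linarith) hx.ne] at hl
    simp only [hFdef]
    have : (x - d) / x - ((x - d) / x)⁻¹ = d * (-x⁻¹ - (x - d)⁻¹) := by
      have : x - d ≠ 0 := by linarith
      have := hx.ne
      field_simp
      ring
    rw [this] at hl
    have h2 : (2 / d) * (Real.log (x - d) - Real.log x) ≤ -x⁻¹ - (x - d)⁻¹ := by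
      rw [div_mul_eq_mul_div, div_le_iff₀ hd0]; linarith
    apply mul_nonneg (by positivity)
    linarith
  have hpos : ∀ x > d, F x ≤ 0 := by
    intro x hx
    have hx0 : 0 < x - d := by linarith
    have hq : 1 ≤ x / (x - d) := by
      rw [le_div_iff₀ hx0]; linarith
    have hl := log_aux _ hq
    rw [Real.log_div (by linarith) hx0.ne'] at hl
    simp only [hFdef]
    have : x / (x - d) - (x / (x - d))⁻¹ = d * (x⁻¹ + (x - d)⁻¹) := by
      have : x ≠ 0 := by linarith
      have := hx0.ne'
      field_simp
      ring
    rw [this] at hl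
    have h2 : (2 / d) * (Real.log x - Real.log (x - d)) ≤ x⁻¹ + (x - d)⁻¹ := by
      rw [div_mul_eq_mul_div, div_le_iff₀ hd0]; linarith
    apply mul_nonpos_of_nonneg_of_nonpos (by positivity)
    linarith
  have e : ∀ i ∈ S, 2 * h i / (a i * (a i - d)) ^ 2 = (if a i < 0 then 2 * h i / p (a i) ^ 2 else 0) +
      (if d < a i then 2 * h i / p (a i) ^ 2 else 0) +
      (if 0 < a i ∧ a i < d then 2 * h i / p (a i) ^ 2 else 0) := by
    intro i hi
    rcases lt_trichotomy (a i) 0 with h | h | h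
    · have : ¬ d < a i := by linarith
      simp [h, h.not_gt, this, hpdef]
    · simp [h, hpdef]
    · rcases lt_trichotomy (a i) d with h' | h' | h'
      · simp [h, h.not_gt, h', h'.not_gt, hpdef]
      · simp [h', hpdef]
      · simp [h', h'.not_gt, h, h.not_gt, hpdef]
  rw [Finset.sum_congr rfl e, Finset.sum_add_distrib, Finset.sum_add_distrib, ← Finset.sum_filter,
    ← Finset.sum_filter, ← Finset.sum_filter]
  have hp : ∀ x, x ≠ 0 → x - d ≠ 0 → p x ≠ 0 := fun x h1 h2 => mul_ne_zero h1 h2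
  have h1 : ∑ i ∈ S with a i < 0, 2 * h i / p (a i) ^ 2 ≤ F (-b) - 0 := by
    have hU : ∀ x ∈ Set.Iio (0 : ℝ), x ≠ 0 ∧ x - d ≠ 0 := fun x hx => by
      rw [Set.mem_Iio] at hx
      exact ⟨by linarith, by linarith⟩
    have loc : ∀ i ∈ S.filter (fun i => a i < 0), a i + h i ≤ -b ∧ 0 < h i := by
      intro i hi
      rw [Finset.mem_filter] at hi
      have := ha i hi.1 hi.2.ne
      rw [abs_of_neg hi.2] at this
      exact ⟨by linarith, hh i hi.1⟩
    refine comp _ a h (Set.Iio 0) (convex_Iio 0) F p (fun x hx => hp x (hU x hx).1 (hU x hx).2)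
      (fun x hx => hF x (hU x hx).1 (hU x hx).2) ?_ (fun i hi => (loc i hi).2) ?_ ?_ ?_ _ _ ?_ ?_ ?_
    · intro x k hx h1 h2
      simp only [Set.mem_Iio] at *
      apply hmid
      · rw [abs_of_neg hx]
        exact abs_le.2 ⟨by linarith, by linarith⟩
      · rw [abs_of_neg (by linarith : x - d < 0)]
        exact abs_le.2 ⟨by linarith, by linarith⟩
    · intro i hi
      have := loc i hi
      simp only [Set.mem_Iio]; linarith
    · intro i hi
      have := loc i hi
      simp only [Set.mem_Iio]; linarith
    · intro i hi j hj
      exact disj i (Finset.mem_filter.1 hi).1 j (Finset.mem_filter.1 hj).1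
    · intro i hi
      have := loc i hi
      apply hneg; linarith
    · intro i hi
      have := loc i hi
      apply hmonoU _ (convex_Iio 0) hU <;> (try simp only [Set.mem_Iio]) <;> linarith
    · apply hneg; linarith
  have h2 : ∑ i ∈ S with d < a i, 2 * h i / p (a i) ^ 2 ≤ 0 - F (d + b') := by
    have hU : ∀ x ∈ Set.Ioi d, x ≠ 0 ∧ x - d ≠ 0 := fun x hx => by
      rw [Set.mem_Ioi] at hx
      exact ⟨by linarith, by linarith⟩
    have loc : ∀ i ∈ S.filter (fun i => d < a i), d + b' ≤ a i - h i ∧ 0 < h i := by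
      intro i hi
      rw [Finset.mem_filter] at hi
      have := had i hi.1 hi.2.ne'
      rw [abs_of_pos (by linarith)] at this
      exact ⟨by linarith, hh i hi.1⟩
    refine comp _ a h (Set.Ioi d) (convex_Ioi d) F p (fun x hx => hp x (hU x hx).1 (hU x hx).2)
      (fun x hx => hF x (hU x hx).1 (hU x hx).2) ?_ (fun i hi => (loc i hi).2) ?_ ?_ ?_ _ _ ?_ ?_ ?_
    · intro x k hx h1 h2
      simp only [Set.mem_Ioi] at *
      apply hmid
      · rw [abs_of_pos (by linarith : 0 < x)]
        exact abs_le.2 ⟨by linarith, by linarith⟩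
      · rw [abs_of_pos (by linarith : 0 < x - d)]
        exact abs_le.2 ⟨by linarith, by linarith⟩
    · intro i hi
      have := loc i hi
      simp only [Set.mem_Ioi]; linarith
    · intro i hi
      have := loc i hi
      simp only [Set.mem_Ioi]; linarith
    · intro i hi j hj
      exact disj i (Finset.mem_filter.1 hi).1 j (Finset.mem_filter.1 hj).1
    · intro i hi
      have := loc i hi
      apply hmonoU _ (convex_Ioi d) hU <;> (try simp only [Set.mem_Ioi]) <;> linarith
    · intro i hi
      have := loc i hi
      apply hpos; linarith
    · apply hpos; linarith
  have h3 : ∑ i ∈ S with (0 < a i ∧ a i < d), 2 * h i / p (a i) ^ 2 ≤ F (d - b') - F b := by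
    have hU : ∀ x ∈ Set.Ioo 0 d, x ≠ 0 ∧ x - d ≠ 0 := fun x hx => by
      rw [Set.mem_Ioo] at hx
      exact ⟨by linarith, by linarith⟩
    have loc : ∀ i ∈ S.filter (fun i => 0 < a i ∧ a i < d),
        b ≤ a i - h i ∧ a i + h i ≤ d - b' ∧ 0 < h i := by
      intro i hi
      rw [Finset.mem_filter] at hi
      have h1 := had i hi.1 hi.2.2.ne
      have h2 := ha i hi.1 hi.2.1.ne'
      rw [abs_of_neg (by linarith)] at h1
      rw [abs_of_pos (by linarith)] at h2
      exact ⟨by linarith, by linarith, hh i hi.1⟩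
    have hmem : ∀ x, b ≤ x → x ≤ d - b' → x ∈ Set.Ioo 0 d := fun x h1 h2 =>
      ⟨by linarith, by linarith⟩
    refine comp _ a h (Set.Ioo 0 d) (convex_Ioo 0 d) F p (fun x hx => hp x (hU x hx).1 (hU x hx).2)
      (fun x hx => hF x (hU x hx).1 (hU x hx).2) ?_ (fun i hi => (loc i hi).2.2) ?_ ?_ ?_ _ _ ?_ ?_ ?_
    · intro x k hx h1 h2
      simp only [Set.mem_Ioo] at *
      apply hmid
      · rw [abs_of_pos (by linarith : 0 < x)]
        exact abs_le.2 ⟨by linarith, by linarith⟩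
      · rw [abs_of_neg (by linarith : x - d < 0)]
        exact abs_le.2 ⟨by linarith, by linarith⟩
    · intro i hi
      have := loc i hi
      apply hmem <;> linarith
    · intro i hi
      have := loc i hi
      apply hmem <;> linarith
    · intro i hi j hj
      exact disj i (Finset.mem_filter.1 hi).1 j (Finset.mem_filter.1 hj).1
    · intro i hi
      have := loc i hi
      apply hmonoU _ (convex_Ioo 0 d) hU _ _ this.1 <;> apply hmem <;> linarith
    · intro i hi
      have := loc i hi
      apply hmonoU _ (convex_Ioo 0 d) hU _ _ this.2.1 <;> apply hmem <;> linarith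
    · apply hmonoU _ (convex_Ioo 0 d) hU _ _ (by linarith) <;> apply hmem <;> linarith
  have key : ∀ c, 0 < c → c < d → (d + c)⁻¹ - (d - c)⁻¹ ≤ 0 ∧ Real.log (d - c) ≤ Real.log (d + c) := by
    intro c h1 h2
    constructor
    · have := inv_anti₀ (by linarith : 0 < d - c) (by linarith : d - c ≤ d + c)
      linarith
    · exact Real.log_le_log (by linarith) (by linarith)
  have k1 := key b hb (by linarith)
  have k2 := key b' hb' (by linarith)
  have f1 : F (-b) - F b ≤ (2 / b) / d ^ 2 := by
    have : F (-b) - F b = (1 / d ^ 2) * (2 / b + ((d + b)⁻¹ - (d - b)⁻¹)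
        - (2 / d) * (Real.log (d + b) - Real.log (d - b))) := by
      simp only [hFdef]
      rw [show -b - d = -(d + b) by ring, show b - d = -(d - b) by ring]
      simp only [Real.log_neg_eq_log, inv_neg]
      ring
    rw [this, div_eq_mul_one_div (2 / b), mul_comm]
    gcongr
    have : 0 ≤ (2 / d) * (Real.log (d + b) - Real.log (d - b)) :=
      mul_nonneg (by positivity) (by linarith [k1.2])
    linarith [k1.1]
  have f2 : F (d - b') - F (d + b') ≤ (2 / b') / d ^ 2 := by
    have : F (d - b') - F (d + b') = (1 / d ^ 2) * (2 / b' + ((d + b')⁻¹ - (d - b')⁻¹)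
        - (2 / d) * (Real.log (d + b') - Real.log (d - b'))) := by
      simp only [hFdef]
      rw [show d - b' - d = -b' by ring, show d + b' - d = b' by ring]
      simp only [Real.log_neg_eq_log, inv_neg]
      ring
    rw [this, div_eq_mul_one_div (2 / b'), mul_comm]
    gcongr
    have : 0 ≤ (2 / d) * (Real.log (d + b') - Real.log (d - b')) :=
      mul_nonneg (by positivity) (by linarith [k2.2])
    linarith [k2.1]
  rw [add_div]
  linarith

section
variable {N : ℕ} (lam δ : Fin N → ℝ) (hl : Function.Injective lam) (hpos : ∀ n, 0 < δ n)
  (hsep : ∀ m n, m ≠ n → δ m / 2 + δ n / 2 ≤ |lam m - lam n|)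

lemma q2 (hl : Function.Injective lam) (hpos : ∀ n, 0 < δ n)
    (hsep : ∀ m n, m ≠ n → δ m / 2 + δ n / 2 ≤ |lam m - lam n|) (s : Fin N) :
    ∑ t, δ t / (lam t - lam s) ^ 2 ≤ 4 / δ s := by
  have := sum2 Finset.univ (fun t => lam t - lam s) (fun t => δ t / 2) (δ s / 2)
    (by linarith [hpos s]) (fun i _ => by linarith [hpos i])
    (fun i _ h => hsep i s (fun h' => h (by rw [h', sub_self])))
    (fun i _ j _ hij => by simpa using hsep i j hij)
  calc _ = _ := Finset.sum_congr rfl (fun i _ => by rw [mul_div_cancel₀ _ (two_ne_zero)])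
    _ ≤ _ := this
    _ = _ := by have := (hpos s).ne'; field_simp; norm_num

lemma q4 (hl : Function.Injective lam) (hpos : ∀ n, 0 < δ n)
    (hsep : ∀ m n, m ≠ n → δ m / 2 + δ n / 2 ≤ |lam m - lam n|) (s : Fin N) :
    ∑ t, δ t / ((lam t - lam s) ^ 2) ^ 2 ≤ (16 / 3) / δ s ^ 3 := by
  have := sum4 Finset.univ (fun t => lam t - lam s) (fun t => δ t / 2) (δ s / 2)
    (by linarith [hpos s]) (fun i _ => by linarith [hpos i])
    (fun i _ h => hsep i s (fun h' => h (by rw [h', sub_self])))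
    (fun i _ j _ hij => by simpa using hsep i j hij)
  calc _ = _ := Finset.sum_congr rfl (fun i _ => by rw [mul_div_cancel₀ _ (two_ne_zero)])
    _ ≤ _ := this
    _ = _ := by have := (hpos s).ne'; field_simp; norm_num

lemma q22 (hl : Function.Injective lam) (hpos : ∀ n, 0 < δ n)
    (hsep : ∀ m n, m ≠ n → δ m / 2 + δ n / 2 ≤ |lam m - lam n|) (s s' : Fin N) (hss : s ≠ s') :
    ∑ t, δ t / ((lam t - lam s) * (lam t - lam s')) ^ 2 ≤ (4 / δ s + 4 / δ s') / (lam s - lam s') ^ 2 := by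
  wlog hlt : lam s < lam s' generalizing s s'
  · have h := this s' s hss.symm (lt_of_le_of_ne (not_lt.1 hlt) (fun h => hss (hl h.symm)))
    rw [add_comm, ← neg_sub (lam s') (lam s), neg_sq]
    refine le_trans (le_of_eq ?_) h
    refine Finset.sum_congr rfl (fun i _ => by rw [mul_comm])
  have hd := hsep s s' hss
  rw [abs_of_neg (by linarith)] at hd
  have := twoPole Finset.univ (fun t => lam t - lam s) (fun t => δ t / 2) (δ s / 2) (δ s' / 2)
    (lam s' - lam s)
    (by linarith [hpos s]) (by linarith [hpos s']) (by linarith) (fun i _ => by linarith [hpos i])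
    (fun i _ h => hsep i s (fun h' => h (by rw [h', sub_self])))
    (fun i _ h => by
      simpa using hsep i s' (fun h' => h (by rw [h'])))
    (fun i _ j _ hij => by simpa using hsep i j hij)
  calc _ = _ := Finset.sum_congr rfl (fun i _ => by
        rw [mul_div_cancel₀ _ (two_ne_zero), sub_sub_sub_cancel_right])
    _ ≤ _ := this
    _ = _ := by
      rw [← neg_sub (lam s) (lam s'), neg_sq]
      congr 1
      have := (hpos s).ne'; have := (hpos s').ne'; field_simp; ring

lemma gram (c : Fin N → ℝ) (hc : ∀ n, c n ^ 2 = δ n) (hl : Function.Injective lam) (s t : Fin N) :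
    ∑ m, (c m * c s / (lam m - lam s)) * (c m * c t / (lam m - lam t)) =
      c s * c t / (lam s - lam t) * ((∑ m, δ m / (lam m - lam s)) - (∑ m, δ m / (lam m - lam t)))
      + c s * c t * (δ s + δ t) / (lam s - lam t) ^ 2
      + if s = t then δ s * ∑ m, δ m / (lam m - lam s) ^ 2 else 0 := by
  by_cases hst : s = t
  · subst hst
    simp only [sub_self, div_zero, zero_mul, if_true, zero_pow two_ne_zero, zero_add, Finset.mul_sum]
    refine Finset.sum_congr rfl (fun m _ => ?_)
    rw [← hc m, ← hc s, div_mul_div_comm, ← mul_div_assoc, pow_two (lam m - lam s)]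
    congr 1
    ring
  · have h0 : lam s - lam t ≠ 0 := sub_ne_zero.2 (fun h => hst (hl h))
    have e : ∀ m, (c m * c s / (lam m - lam s)) * (c m * c t / (lam m - lam t)) =
        c s * c t / (lam s - lam t) * (δ m / (lam m - lam s) - δ m / (lam m - lam t))
        + ((if m = s then c s * c t * δ s / (lam s - lam t) ^ 2 else 0) +
          (if m = t then c s * c t * δ t / (lam s - lam t) ^ 2 else 0)) := by
      intro m
      by_cases h1 : m = s
      · subst h1
        simp only [sub_self, div_zero, zero_mul, if_true, if_neg hst]
        field_simp
        ring
      · by_cases h2 : m = t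
        · subst h2
          have h0' : lam m - lam s ≠ 0 := sub_ne_zero.2 (fun h => h1 (hl h))
          simp only [sub_self, div_zero, mul_zero, if_true, if_neg h1]
          rw [← neg_sub (lam m) (lam s)]
          field_simp
          ring
        · have h3 : lam m - lam s ≠ 0 := sub_ne_zero.2 (fun h => h1 (hl h))
          have h4 : lam m - lam t ≠ 0 := sub_ne_zero.2 (fun h => h2 (hl h))
          simp only [if_neg h1, if_neg h2, ← hc m]
          field_simp
          ring
    rw [Finset.sum_congr rfl (fun m _ => e m), Finset.sum_add_distrib, Finset.sum_add_distrib,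
      ← Finset.mul_sum, Finset.sum_sub_distrib, if_neg hst]
    simp only [Finset.sum_ite_eq', Finset.mem_univ, if_true]
    ring

lemma Tbound (c : Fin N → ℝ) (hc : ∀ n, c n ^ 2 = δ n) (hc0 : ∀ n, 0 ≤ c n)
    (hl : Function.Injective lam) (hpos : ∀ n, 0 < δ n)
    (hsep : ∀ m n, m ≠ n → δ m / 2 + δ n / 2 ≤ |lam m - lam n|) (v : Fin N → ℝ) (hv : ∀ n, 0 ≤ v n) :
    ∑ s, ∑ t, c s * c t * (δ s + δ t) / (lam s - lam t) ^ 2 * (v s * v t) ≤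
      17.24 * ∑ s, v s ^ 2 := by
  set V := ∑ s, v s ^ 2 with hV
  set B : Fin N → Fin N → ℝ := fun s t => δ s * c s * c t / (lam s - lam t) ^ 2 with hB
  set T := ∑ t, v t * ∑ s, B s t * v s with hT
  have hV0 : 0 ≤ V := Finset.sum_nonneg (fun i _ => sq_nonneg _)
  have hBn : ∀ s t, 0 ≤ B s t := fun s t => by
    have := hpos s; have := hc0 s; have := hc0 t
    simp only [hB]; positivity
  have hT0 : 0 ≤ T := Finset.sum_nonneg (fun i _ => mul_nonneg (hv i)
    (Finset.sum_nonneg (fun j _ => mul_nonneg (hBn _ _) (hv _))))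
  have hK : ∑ s, ∑ t, c s * c t * (δ s + δ t) / (lam s - lam t) ^ 2 * (v s * v t) = 2 * T := by
    have e : ∀ s t, c s * c t * (δ s + δ t) / (lam s - lam t) ^ 2 * (v s * v t) =
        v t * (B s t * v s) + v s * (B t s * v t) := by
      intro s t
      simp only [hB]
      rw [← neg_sub (lam s) (lam t), neg_sq]
      ring
    simp only [e, Finset.sum_add_distrib]
    rw [two_mul, hT]
    simp only [Finset.mul_sum]
    congr 1
    exact Finset.sum_comm
  have hBB : ∀ s s', ∑ t, B s t * B s' t ≤
      4 * (c s * c s' * (δ s + δ s') / (lam s - lam s') ^ 2) + if s = s' then 16 / 3 else 0 := by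
    intro s s'
    have e : ∑ t, B s t * B s' t = δ s * c s * (δ s' * c s') *
        ∑ t, δ t / ((lam t - lam s) * (lam t - lam s')) ^ 2 := by
      rw [Finset.mul_sum]
      refine Finset.sum_congr rfl (fun t _ => ?_)
      simp only [hB]
      rw [← neg_sub (lam t) (lam s), ← neg_sub (lam t) (lam s'), neg_sq, neg_sq, ← hc t,
        div_mul_div_comm, ← mul_div_assoc, mul_pow]
      congr 1
      ring
    rw [e]
    have p1 := hpos s
    have p2 := hpos s'
    have p3 := hc0 s
    have p4 := hc0 s'
    by_cases h : s = s'
    · subst h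
      have := q4 lam δ hl hpos hsep s
      simp only [← pow_two]
      calc (δ s * c s) ^ 2 * ∑ t, δ t / ((lam t - lam s) ^ 2) ^ 2
          ≤ (δ s * c s) ^ 2 * ((16 / 3) / δ s ^ 3) := by gcongr
        _ = 16 / 3 := by rw [mul_pow, hc]; field_simp
        _ = _ := by simp
    · have := q22 lam δ hl hpos hsep s s' h
      calc _ ≤ δ s * c s * (δ s' * c s') * ((4 / δ s + 4 / δ s') / (lam s - lam s') ^ 2) := by gcongr
        _ = _ := by
          have h0 : lam s - lam s' ≠ 0 := sub_ne_zero.2 (fun h' => h (hl h'))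
          rw [if_neg h]
          field_simp
          ring
  have hCS : T ^ 2 ≤ V * ∑ t, (∑ s, B s t * v s) ^ 2 := Finset.sum_mul_sq_le_sq_mul_sq _ _ _
  have hE : ∑ t, (∑ s, B s t * v s) ^ 2 = ∑ s, ∑ s', (∑ t, B s t * B s' t) * (v s * v s') := by
    simp only [pow_two, Finset.sum_mul_sum]
    simp only [Finset.sum_mul]
    rw [Finset.sum_comm]
    refine Finset.sum_congr rfl (fun s _ => ?_)
    rw [Finset.sum_comm]
    refine Finset.sum_congr rfl (fun s' _ => Finset.sum_congr rfl (fun t _ => ?_))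
    ring
  have hE2 : ∑ s, ∑ s', (∑ t, B s t * B s' t) * (v s * v s') ≤ 8 * T + 16 / 3 * V := by
    calc _ ≤ ∑ s, ∑ s', (4 * (c s * c s' * (δ s + δ s') / (lam s - lam s') ^ 2) +
          if s = s' then 16 / 3 else 0) * (v s * v s') :=
          Finset.sum_le_sum (fun s _ => Finset.sum_le_sum (fun s' _ =>
            mul_le_mul_of_nonneg_right (hBB s s') (mul_nonneg (hv _) (hv _))))
      _ = 4 * (∑ s, ∑ t, c s * c t * (δ s + δ t) / (lam s - lam t) ^ 2 * (v s * v t)) + 16 / 3 * V := by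
          simp only [add_mul, Finset.sum_add_distrib, ite_mul, zero_mul, Finset.sum_ite_eq,
            Finset.mem_univ, if_true, hV, Finset.mul_sum, mul_assoc, pow_two]
      _ = _ := by rw [hK]; ring
  rw [hK]
  rw [hE] at hCS
  have h1 : T ^ 2 ≤ V * (8 * T + 16 / 3 * V) := hCS.trans (by gcongr)
  by_contra hcon
  push Not at hcon
  have h2 : 8.62 * V < T := by norm_num at hcon ⊢; linarith
  norm_num at h2
  nlinarith

lemma eig (c : Fin N → ℝ) (hc : ∀ n, c n ^ 2 = δ n) (hc0 : ∀ n, 0 ≤ c n)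
    (hl : Function.Injective lam) (hpos : ∀ n, 0 < δ n)
    (hsep : ∀ m n, m ≠ n → δ m / 2 + δ n / 2 ≤ |lam m - lam n|) (u : Fin N → ℂ) (κ : ℂ)
    (hκ : (starRingEnd ℂ) κ = -κ)
    (hu : ∀ m, ∑ n, ((c m * c n / (lam m - lam n) : ℝ) : ℂ) * u n = κ * u m) :
    ‖κ‖ ^ 2 * ∑ s, ‖u s‖ ^ 2 ≤ 21.24 * ∑ s, ‖u s‖ ^ 2 := by
  set A : Fin N → Fin N → ℝ := fun m n => c m * c n / (lam m - lam n) with hA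
  set Sg : Fin N → ℝ := fun s => ∑ m, δ m / (lam m - lam s) with hSg
  set K : Fin N → Fin N → ℝ := fun s t => c s * c t * (δ s + δ t) / (lam s - lam t) ^ 2 with hKdef
  set Q : Fin N → ℝ := fun s => δ s * ∑ m, δ m / (lam m - lam s) ^ 2 with hQ
  have hG : ∀ s t, ∑ m, A m s * A m t = A s t * (Sg s - Sg t) + K s t + if s = t then Q s else 0 :=
    fun s t => gram lam δ c hc hl s t
  have hanti : ∀ s t, A t s = - A s t := by
    intro s t
    simp only [hA]
    rw [← neg_sub (lam s) (lam t), div_neg, mul_comm (c t)]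
  have hu' : ∀ m, ∑ n, (A m n : ℂ) * (starRingEnd ℂ) (u n) = -κ * (starRingEnd ℂ) (u m) := by
    intro m
    have := congrArg (starRingEnd ℂ) (hu m)
    simpa only [map_sum, map_mul, Complex.conj_ofReal, hκ] using this
  have main : ((‖κ‖ ^ 2 * ∑ s, ‖u s‖ ^ 2 : ℝ) : ℂ) =
      (∑ s, ∑ t, (K s t : ℂ) * (u s * (starRingEnd ℂ) (u t))) +
        ∑ s, (Q s : ℂ) * (u s * (starRingEnd ℂ) (u s)) := by
    have e1 : ((‖κ‖ ^ 2 * ∑ s, ‖u s‖ ^ 2 : ℝ) : ℂ) =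
        ∑ m, (∑ s, (A m s : ℂ) * u s) * (∑ t, (A m t : ℂ) * (starRingEnd ℂ) (u t)) := by
      simp only [hu']
      have : ∀ m, ∑ s, (A m s : ℂ) * u s = κ * u m := hu
      simp only [this]
      push_cast
      rw [Finset.mul_sum]
      refine Finset.sum_congr rfl (fun m _ => ?_)
      rw [← Complex.mul_conj', ← Complex.mul_conj', hκ]
      ring
    have e2 : ∑ m, (∑ s, (A m s : ℂ) * u s) * (∑ t, (A m t : ℂ) * (starRingEnd ℂ) (u t)) =
        ∑ s, ∑ t, ((∑ m, A m s * A m t : ℝ) : ℂ) * (u s * (starRingEnd ℂ) (u t)) := by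
      simp only [Finset.sum_mul_sum]
      rw [Finset.sum_comm]
      refine Finset.sum_congr rfl (fun s _ => ?_)
      rw [Finset.sum_comm]
      refine Finset.sum_congr rfl (fun t _ => ?_)
      push_cast
      rw [Finset.sum_mul]
      refine Finset.sum_congr rfl (fun m _ => ?_)
      ring
    have e3 : ∑ s, ∑ t, ((A s t * (Sg s - Sg t) : ℝ) : ℂ) * (u s * (starRingEnd ℂ) (u t)) = 0 := by
      have f1 : ∑ s, ∑ t, ((A s t * Sg s : ℝ) : ℂ) * (u s * (starRingEnd ℂ) (u t)) =
          ∑ s, (Sg s : ℂ) * (-κ * (u s * (starRingEnd ℂ) (u s))) := by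
        refine Finset.sum_congr rfl (fun s _ => ?_)
        calc _ = ((Sg s : ℂ) * u s) * ∑ t, (A s t : ℂ) * (starRingEnd ℂ) (u t) := by
              rw [Finset.mul_sum]
              refine Finset.sum_congr rfl (fun t _ => ?_)
              push_cast; ring
          _ = _ := by rw [hu']; ring
      have f2 : ∑ s, ∑ t, ((A s t * Sg t : ℝ) : ℂ) * (u s * (starRingEnd ℂ) (u t)) =
          ∑ s, (Sg s : ℂ) * (-κ * (u s * (starRingEnd ℂ) (u s))) := by
        rw [Finset.sum_comm]
        refine Finset.sum_congr rfl (fun t _ => ?_)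
        calc _ = -((Sg t : ℂ) * (starRingEnd ℂ) (u t)) * ∑ s, (A t s : ℂ) * u s := by
              rw [Finset.mul_sum]
              refine Finset.sum_congr rfl (fun s _ => ?_)
              rw [hanti s t]
              push_cast; ring
          _ = _ := by rw [show ∑ s, (A t s : ℂ) * u s = κ * u t from hu t]; ring
      have : ∀ s t, ((A s t * (Sg s - Sg t) : ℝ) : ℂ) * (u s * (starRingEnd ℂ) (u t)) =
          ((A s t * Sg s : ℝ) : ℂ) * (u s * (starRingEnd ℂ) (u t)) -
          ((A s t * Sg t : ℝ) : ℂ) * (u s * (starRingEnd ℂ) (u t)) := by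
        intro s t; push_cast; ring
      simp only [this, Finset.sum_sub_distrib]
      rw [f1, f2, sub_self]
    rw [e1, e2]
    have e4 : ∀ s t, ((∑ m, A m s * A m t : ℝ) : ℂ) * (u s * (starRingEnd ℂ) (u t)) =
        ((A s t * (Sg s - Sg t) : ℝ) : ℂ) * (u s * (starRingEnd ℂ) (u t)) +
        (K s t : ℂ) * (u s * (starRingEnd ℂ) (u t)) +
        if s = t then (Q s : ℂ) * (u s * (starRingEnd ℂ) (u t)) else 0 := by
      intro s t
      rw [hG]
      split_ifs <;> push_cast <;> ring
    simp only [e4, Finset.sum_add_distrib]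
    rw [e3, zero_add]
    simp only [Finset.sum_ite_eq, Finset.mem_univ, if_true]
  have hKn : ∀ s t, 0 ≤ K s t := fun s t => by
    have := hpos s; have := hpos t; have := hc0 s; have := hc0 t
    simp only [hKdef]; positivity
  have hQn : ∀ s, 0 ≤ Q s := fun s => by
    have := hpos s
    exact mul_nonneg this.le (Finset.sum_nonneg (fun i _ => by have := hpos i; positivity))
  have hQ4 : ∀ s, Q s ≤ 4 := fun s => by
    have h := q2 lam δ hl hpos hsep s
    have := hpos s
    rw [le_div_iff₀ this] at h
    simp only [hQ]; linarith
  have hTb := Tbound lam δ c hc hc0 hl hpos hsep (fun s => ‖u s‖) (fun s => norm_nonneg _)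
  have n1 := congrArg norm main
  rw [Complex.norm_real, Real.norm_of_nonneg (by positivity)] at n1
  rw [n1]
  calc _ ≤ ‖∑ s, ∑ t, (K s t : ℂ) * (u s * (starRingEnd ℂ) (u t))‖ +
        ‖∑ s, (Q s : ℂ) * (u s * (starRingEnd ℂ) (u s))‖ := norm_add_le _ _
    _ ≤ (∑ s, ∑ t, K s t * (‖u s‖ * ‖u t‖)) + ∑ s, 4 * ‖u s‖ ^ 2 := by
      apply add_le_add
      · refine (norm_sum_le _ _).trans (Finset.sum_le_sum (fun s _ => (norm_sum_le _ _).trans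
          (Finset.sum_le_sum (fun t _ => le_of_eq ?_))))
        rw [norm_mul, norm_mul, RCLike.norm_conj, Complex.norm_real, Real.norm_of_nonneg (hKn s t)]
      · refine (norm_sum_le _ _).trans (Finset.sum_le_sum (fun s _ => ?_))
        rw [norm_mul, norm_mul, RCLike.norm_conj, Complex.norm_real, Real.norm_of_nonneg (hQn s), pow_two]
        exact mul_le_mul_of_nonneg_right (hQ4 s) (by positivity)
    _ ≤ _ := by
      rw [← Finset.mul_sum]
      have : ∑ s, ∑ t, K s t * (‖u s‖ * ‖u t‖) ≤ 17.24 * ∑ s, ‖u s‖ ^ 2 := hTb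
      norm_num at this ⊢
      linarith

lemma herm (H : Matrix (Fin N) (Fin N) ℂ) (hH : H.IsHermitian) (C : ℝ)
    (hC : ∀ j, (hH.eigenvalues j) ^ 2 ≤ C) (y : Fin N → ℂ) :
    ∑ m, ‖(H.mulVec y) m‖ ^ 2 ≤ C * ∑ m, ‖y m‖ ^ 2 := by
  set T := Matrix.toEuclideanLin H
  have hT : T.IsSymmetric := Matrix.isSymmetric_toEuclideanLin_iff.2 hH
  set Y : EuclideanSpace ℂ (Fin N) := WithLp.toLp 2 y with hY
  have e1 : ∑ m, ‖y m‖ ^ 2 = ‖Y‖ ^ 2 := by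
    rw [EuclideanSpace.norm_sq_eq]
  have e2 : ∑ m, ‖(H.mulVec y) m‖ ^ 2 = ‖T Y‖ ^ 2 := by
    rw [EuclideanSpace.norm_sq_eq]
    rfl
  rw [e1, e2, ← hH.eigenvectorBasis.sum_sq_norm_inner_right, ← hH.eigenvectorBasis.sum_sq_norm_inner_right,
    Finset.mul_sum]
  refine Finset.sum_le_sum (fun j _ => ?_)
  have e3 : T (hH.eigenvectorBasis j) = (hH.eigenvalues j : ℂ) • hH.eigenvectorBasis j := by
    have := hH.mulVec_eigenvectorBasis j
    ext i
    have := congrFun this i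
    simpa [T, Matrix.toEuclideanLin] using this
  rw [← hT, e3, inner_smul_left, norm_mul, mul_pow]
  gcongr
  simpa using hC j
end

end MH

theorem stmt6 (N : ℕ) (lam : Fin N → ℝ) (hl : Function.Injective lam)
    (x y : Fin N → ℂ) (δ : Fin N → ℝ)
    (hδ : ∀ n, IsLeast {d : ℝ | ∃ m, m ≠ n ∧ d = |lam m - lam n|} (δ n)) :
    ‖∑ m, ∑ n, if m ≠ n then x m * y n / ((lam m - lam n : ℝ) : ℂ) else 0‖ ≤
      (3 * Real.pi / 2) * Real.sqrt (∑ m, ‖x m‖ ^ 2 / δ m) *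
        Real.sqrt (∑ n, ‖y n‖ ^ 2 / δ n) := by
  have hpos : ∀ n, 0 < δ n := by
    intro n
    obtain ⟨m, hm, he⟩ := (hδ n).1
    rw [he]
    exact abs_pos.2 (sub_ne_zero.2 (fun h => hm (hl h)))
  have hsep : ∀ m n, m ≠ n → δ m / 2 + δ n / 2 ≤ |lam m - lam n| := by
    intro m n h
    have h1 := (hδ n).2 ⟨m, h, rfl⟩
    have h2 := (hδ m).2 ⟨n, h.symm, rfl⟩
    rw [abs_sub_comm] at h2
    linarith
  set c : Fin N → ℝ := fun n => Real.sqrt (δ n) with hcdef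
  have hc : ∀ n, c n ^ 2 = δ n := fun n => Real.sq_sqrt (hpos n).le
  have hcp : ∀ n, 0 < c n := fun n => Real.sqrt_pos.2 (hpos n)
  set A : Fin N → Fin N → ℝ := fun m n => c m * c n / (lam m - lam n) with hA
  have hanti : ∀ s t, A t s = - A s t := by
    intro s t
    simp only [hA]
    rw [← neg_sub (lam s) (lam t), div_neg, mul_comm (c t)]
  set H : Matrix (Fin N) (Fin N) ℂ := Matrix.of (fun m n => Complex.I * (A m n : ℂ)) with hHdef
  have hH : H.IsHermitian := by
    ext m n
    simp only [Matrix.conjTranspose_apply, hHdef, Matrix.of_apply]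
    rw [hanti m n]
    simp
  have hC : ∀ j, (hH.eigenvalues j) ^ 2 ≤ (21.24 : ℝ) := by
    intro j
    set μ := hH.eigenvalues j with hμ
    set e := hH.eigenvectorBasis j with he
    have hV : ∑ s, ‖e s‖ ^ 2 = 1 := by
      rw [← EuclideanSpace.norm_sq_eq, he, hH.eigenvectorBasis.norm_eq_one]; norm_num
    have := MH.eig lam δ c hc (fun n => (hcp n).le) hl hpos hsep (fun s => e s) (-Complex.I * μ) (by simp)
      (by
        intro m
        have h := congrFun (hH.mulVec_eigenvectorBasis j) m
        have h' : ∑ n, Complex.I * (A m n : ℂ) * e n = (μ : ℂ) * e m := by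
          simpa [Matrix.mulVec, dotProduct, hHdef] using h
        simp only [mul_assoc] at h'
        rw [← Finset.mul_sum] at h'
        rw [mul_assoc, ← h', ← mul_assoc]
        simp [hA])
    rw [hV] at this
    simpa using this
  have hB := MH.herm H hH 21.24 hC (fun n => y n / c n)
  have hsum : (∑ m, ∑ n, if m ≠ n then x m * y n / ((lam m - lam n : ℝ) : ℂ) else 0) =
      ∑ m, (x m / c m) * (-Complex.I * H.mulVec (fun n => y n / c n) m) := by
    refine Finset.sum_congr rfl (fun m _ => ?_)
    simp only [Matrix.mulVec, dotProduct, Finset.mul_sum, hHdef, Matrix.of_apply]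
    refine Finset.sum_congr rfl (fun n _ => ?_)
    have c1 : (c m : ℂ) ≠ 0 := by exact_mod_cast (hcp m).ne'
    have c2 : (c n : ℂ) ≠ 0 := by exact_mod_cast (hcp n).ne'
    by_cases h : m = n
    · subst h
      simp [hA]
    · rw [if_pos h]
      have c3 : ((lam m - lam n : ℝ) : ℂ) ≠ 0 := by
        exact_mod_cast sub_ne_zero.2 (fun h' => h (hl h'))
      simp only [hA]
      rw [Complex.ofReal_div, Complex.ofReal_mul]
      field_simp
      simp
  have hw : ∀ z : Fin N → ℂ, ∑ m, ‖z m / c m‖ ^ 2 = ∑ m, ‖z m‖ ^ 2 / δ m := by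
    intro z
    refine Finset.sum_congr rfl (fun m _ => ?_)
    rw [norm_div, div_pow, Complex.norm_real, Real.norm_eq_abs, sq_abs, hc]
  rw [hsum]
  set h := H.mulVec (fun n => y n / c n) with hh
  calc _ ≤ ∑ m, ‖x m / c m‖ * ‖h m‖ := by
        refine (norm_sum_le _ _).trans (Finset.sum_le_sum (fun m _ => le_of_eq ?_))
        simp
    _ ≤ Real.sqrt (∑ m, ‖x m / c m‖ ^ 2) * Real.sqrt (∑ m, ‖h m‖ ^ 2) :=
        Real.sum_mul_le_sqrt_mul_sqrt _ _ _
    _ ≤ Real.sqrt (∑ m, ‖x m / c m‖ ^ 2) *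
        ((3 * Real.pi / 2) * Real.sqrt (∑ m, ‖y m / c m‖ ^ 2)) := by
        gcongr
        have hpi := Real.pi_gt_d2
        have : (21.24 : ℝ) ≤ (3 * Real.pi / 2) ^ 2 := by norm_num at hpi ⊢; nlinarith
        have hp0 : 0 ≤ 3 * Real.pi / 2 := by positivity
        rw [← Real.sqrt_sq hp0, ← Real.sqrt_mul (sq_nonneg _)]
        apply Real.sqrt_le_sqrt
        refine hB.trans ?_
        gcongr
    _ = _ := by rw [hw, hw]; ring
end

section
/- Let T > 2 and t₁ < t₂ < ⋯ < t_n be real numbers in [0, T] with t_{k+1} − t_k ≥ 1 for all k. Then for every real t, Σ_{k=1}^n 1/(1 + (t − t_k)²) ≤ π·coth(π). -/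
lemma aux_cot_im (x : ℝ) :
    -((Real.pi : ℂ) * Complex.cot (Real.pi * ((x : ℂ) + Complex.I))).im ≤
      Real.pi * (Real.cosh Real.pi / Real.sinh Real.pi) := by
  have hs : 0 < Real.sinh Real.pi := Real.sinh_pos_iff.2 Real.pi_pos
  have e : (Real.pi : ℂ) * ((x : ℂ) + Complex.I)
      = ((Real.pi * x : ℝ) : ℂ) + (Real.pi : ℂ) * Complex.I := by
    push_cast; ring
  rw [e, Complex.im_ofReal_mul, Complex.cot, Complex.sin_add_mul_I, Complex.cos_add_mul_I,
    ← mul_neg]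
  refine mul_le_mul_of_nonneg_left ?_ Real.pi_pos.le
  generalize Real.pi * x = u
  have h1 : Complex.cos (u : ℂ) * Complex.cosh Real.pi - Complex.sin u * Complex.sinh Real.pi * Complex.I
      = ⟨Real.cos u * Real.cosh Real.pi, - (Real.sin u * Real.sinh Real.pi)⟩ := by
    rw [← Complex.ofReal_cos, ← Complex.ofReal_sin, ← Complex.ofReal_cosh, ← Complex.ofReal_sinh]
    apply Complex.ext <;> simp [-Complex.ofReal_cos, -Complex.ofReal_sin, -Complex.ofReal_cosh, -Complex.ofReal_sinh]
  have h2 : Complex.sin (u : ℂ) * Complex.cosh Real.pi + Complex.cos u * Complex.sinh Real.pi * Complex.I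
      = ⟨Real.sin u * Real.cosh Real.pi, Real.cos u * Real.sinh Real.pi⟩ := by
    rw [← Complex.ofReal_cos, ← Complex.ofReal_sin, ← Complex.ofReal_cosh, ← Complex.ofReal_sinh]
    apply Complex.ext <;> simp [-Complex.ofReal_cos, -Complex.ofReal_sin, -Complex.ofReal_cosh, -Complex.ofReal_sinh]
  rw [h1, h2, Complex.div_im, Complex.normSq_mk]
  have hc := Real.cosh_sq Real.pi
  have hc0 := Real.cosh_pos Real.pi
  have hu := Real.sin_sq_add_cos_sq u
  generalize Real.cosh Real.pi = c at *
  generalize Real.sinh Real.pi = d at *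
  generalize Real.sin u = a at *
  generalize Real.cos u = b at *
  have hD : a * c * (a * c) + b * d * (b * d) = d ^ 2 + a ^ 2 := by
    linear_combination a ^ 2 * hc + d ^ 2 * hu
  dsimp only
  rw [hD]
  have : -(-(a * d) * (a * c) / (d ^ 2 + a ^ 2) - b * c * (b * d) / (d ^ 2 + a ^ 2))
      = c * d / (d ^ 2 + a ^ 2) := by
    rw [← sub_div, ← neg_div]; congr 1; linear_combination c * d * hu
  rw [this, div_le_div_iff₀ (by positivity) hs]
  nlinarith [mul_nonneg hc0.le (sq_nonneg a)]

lemma aux_inv_im (x y : ℝ) (z : ℂ) (hz : z = (y : ℂ) + Complex.I) (hy : y = x) :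
    (1 / z).im = -(1 / (1 + x ^ 2)) := by
  subst hz hy
  simp [Complex.div_im, Complex.normSq_apply]
  ring

lemma aux_Icc (f : ℤ → ℝ) (N : ℕ) :
    ∑ m ∈ Finset.Icc (-(N : ℤ)) N, f m
      = f 0 + ∑ n ∈ Finset.range N, (f (-((n : ℤ) + 1)) + f ((n : ℤ) + 1)) := by
  induction N with
  | zero => simp
  | succ N ih =>
    rw [Finset.sum_range_succ, ← add_assoc, ← ih]
    have : Finset.Icc (-((N + 1 : ℕ) : ℤ)) ((N + 1 : ℕ) : ℤ)
        = insert (-((N : ℤ) + 1)) (insert ((N : ℤ) + 1) (Finset.Icc (-(N : ℤ)) N)) := by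
      ext m; simp only [Finset.mem_insert, Finset.mem_Icc]; omega
    rw [this, Finset.sum_insert, Finset.sum_insert]
    · ring
    · simp
    · simp only [Finset.mem_insert, Finset.mem_Icc]; omega

lemma aux_sum_le (x : ℝ) (N : ℕ) :
    ∑ m ∈ Finset.Icc (-(N : ℤ)) N, 1 / (1 + (x + (m : ℝ)) ^ 2) ≤
      Real.pi * (Real.cosh Real.pi / Real.sinh Real.pi) := by
  refine le_trans ?_ (aux_cot_im x)
  have hz : (x : ℂ) + Complex.I ∈ Complex.integerComplement := by
    rw [Complex.mem_integerComplement_iff]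
    rintro ⟨n, hn⟩
    have := congrArg Complex.im hn
    simp at this
  have h := cot_series_rep' hz
  have hS : Summable (fun n : ℕ => 1 / ((x : ℂ) + Complex.I - (n + 1)) + 1 / ((x : ℂ) + Complex.I + (n + 1))) :=
    summable_cotTerm hz
  have hH := Complex.hasSum_im (hS.hasSum)
  rw [← h] at hH
  have hterm : ∀ n : ℕ, (1 / ((x : ℂ) + Complex.I - (n + 1)) + 1 / ((x : ℂ) + Complex.I + (n + 1))).im
      = -(1 / (1 + (x + ((-((n : ℤ) + 1) : ℤ) : ℝ)) ^ 2) + 1 / (1 + (x + (((n : ℤ) + 1 : ℤ) : ℝ)) ^ 2)) := by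
    intro n
    rw [Complex.add_im, aux_inv_im _ (x - (n + 1)) _ (by push_cast; ring) rfl,
      aux_inv_im _ (x + (n + 1)) _ (by push_cast; ring) rfl]
    push_cast
    ring
  simp_rw [hterm] at hH
  have hH' := hH.neg
  simp only [neg_neg] at hH'
  have := sum_le_hasSum (Finset.range N) (fun i _ => by positivity) hH'
  rw [aux_Icc (fun m => 1 / (1 + (x + (m : ℝ)) ^ 2))]
  rw [Complex.sub_im, aux_inv_im x x _ rfl rfl] at this
  simp only [Int.cast_zero, add_zero]
  linarith

theorem stmt8 (T : ℝ) (hT : 2 < T) (n : ℕ) (t : Fin n → ℝ)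
    (hmem : ∀ k, t k ∈ Set.Icc 0 T)
    (hsep : ∀ (k : Fin n) (h : (k : ℕ) + 1 < n), 1 ≤ t ⟨(k : ℕ) + 1, h⟩ - t k) :
    ∀ s : ℝ, ∑ k, 1 / (1 + (s - t k) ^ 2) ≤
      Real.pi * (Real.cosh Real.pi / Real.sinh Real.pi) := by
  intro s
  have hgap : ∀ (d i : ℕ) (h : i + d < n), (d : ℝ) ≤ t ⟨i + d, h⟩ - t ⟨i, by omega⟩ := by
    intro d
    induction d with
    | zero => intro i h; simp
    | succ d ih =>
      intro i h
      have h1 := ih i (by omega)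
      have h2 := hsep ⟨i + d, by omega⟩ h
      have e : t ⟨i + (d + 1), h⟩ = t ⟨i + d + 1, h⟩ := rfl
      rw [e]
      push_cast
      simp only at h2
      linarith
  have hgap' : ∀ (i j : Fin n), i ≤ j → ((j : ℕ) : ℝ) - (i : ℕ) ≤ t j - t i := by
    intro i j hij
    obtain ⟨d, hd⟩ := Nat.exists_eq_add_of_le (show (i : ℕ) ≤ j from hij)
    have := hgap d i (by omega)
    have e : (⟨(i : ℕ) + d, by omega⟩ : Fin n) = j := Fin.ext hd.symm
    rw [e] at this
    rw [hd]; push_cast; simpa using this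
  -- the comparison progression
  obtain ⟨a, p, hap⟩ : ∃ (a : ℝ) (p : ℕ), ∀ k : Fin n,
      (a + (((k : ℕ) : ℤ) - (p : ℤ) : ℤ)) ^ 2 ≤ (s - t k) ^ 2 := by
    by_cases hex : ∃ q : ℕ, ∃ h : q < n, s ≤ t ⟨q, h⟩
    · classical
      let p := Nat.find hex
      obtain ⟨hp, hps⟩ := Nat.find_spec hex
      refine ⟨min (t ⟨p, hp⟩ - s) 1, p, fun k => ?_⟩
      have ha0 : 0 ≤ min (t ⟨p, hp⟩ - s) 1 := le_min (sub_nonneg.2 hps) zero_le_one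
      have ha1 := min_le_right (t ⟨p, hp⟩ - s) 1
      have ha2 := min_le_left (t ⟨p, hp⟩ - s) 1
      push_cast
      rcases le_or_gt p (k : ℕ) with hk | hk
      · have := hgap' ⟨p, hp⟩ k hk
        have hk' : (p : ℝ) ≤ (k : ℕ) := by exact_mod_cast hk
        simp only at this
        rw [← neg_sub (t k) s, neg_sq]
        apply pow_le_pow_left₀ <;> linarith
      · have hlt : t k < s := by
          by_contra hc
          exact Nat.find_min hex hk ⟨k.2, not_lt.1 hc⟩
        have hk' : ((k : ℕ) : ℝ) + 1 ≤ p := by exact_mod_cast hk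
        have h3 := hgap' k ⟨p - 1, by omega⟩ (show (k : ℕ) ≤ p - 1 by omega)
        have hlt' : t ⟨p - 1, by omega⟩ < s := by
          by_contra hc
          exact Nat.find_min hex (show p - 1 < p by omega) ⟨by omega, not_lt.1 hc⟩
        have h4 := hgap' k ⟨p, hp⟩ (show (k : ℕ) ≤ p by omega)
        have e : ((p - 1 : ℕ) : ℝ) = p - 1 := by
          rw [Nat.cast_sub (by omega)]; simp
        simp only [e] at h3 h4
        rw [← neg_sq]
        apply pow_le_pow_left₀
        · linarith
        · rcases min_choice (t ⟨p, hp⟩ - s) 1 with hm | hm <;> rw [hm] <;> linarith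
    · push Not at hex
      refine ⟨1, n, fun k => ?_⟩
      have hkn : (k : ℕ) < n := k.2
      have h1 := hgap' k ⟨n - 1, by omega⟩ (show (k : ℕ) ≤ n - 1 by omega)
      have h2 := hex (n - 1) (by omega)
      have hk' : ((k : ℕ) : ℝ) + 1 ≤ n := by exact_mod_cast k.2
      have e : ((n - 1 : ℕ) : ℝ) = n - 1 := by
        rw [Nat.cast_sub (by omega)]; simp
      simp only [e] at h1
      push_cast
      rw [← neg_sq]
      apply pow_le_pow_left₀ <;> linarith
  calc ∑ k, 1 / (1 + (s - t k) ^ 2)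
      ≤ ∑ k : Fin n, 1 / (1 + (a + (((k : ℕ) : ℤ) - (p : ℤ) : ℤ)) ^ 2) := by
        apply Finset.sum_le_sum
        intro k _
        apply one_div_le_one_div_of_le (by positivity)
        linarith [hap k]
    _ = ∑ m ∈ (Finset.univ : Finset (Fin n)).image (fun k : Fin n => ((k : ℕ) : ℤ) - (p : ℤ)),
          1 / (1 + (a + (m : ℝ)) ^ 2) := by
        rw [Finset.sum_image]
        intro i _ j _ hij
        apply Fin.ext
        simp only at hij
        omega
    _ ≤ ∑ m ∈ Finset.Icc (-((n + p : ℕ) : ℤ)) (n + p : ℕ), 1 / (1 + (a + (m : ℝ)) ^ 2) := by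
        apply Finset.sum_le_sum_of_subset_of_nonneg
        · intro m hm
          simp only [Finset.mem_image, Finset.mem_univ, true_and] at hm
          obtain ⟨k, rfl⟩ := hm
          have := k.2
          simp only [Finset.mem_Icc]
          omega
        · intros; positivity
    _ ≤ _ := aux_sum_le a (n + p)
end
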